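/- arXiv:2304.03340 — 5 statements merged into one kernel-verified Lean document; each statement's English description precedes it below -/
import Mathlib

section
/- For every X ∈ E, the map t ↦ F(t, X) is differentiable and satisfies ∂F/∂t (t, X) = D_x u(t, φ(t, X)) ∘ F(t, X) for all t (composition of continuous linear maps). -/
noncomputable section

local notation "E3" => EuclideanSpace ℝ (Fin 3)

open Set Filter Topology MeasureTheory

/-- For a family of trajectories of a `C¹` time-dependent vector field which depends differentiably
on its label at each fixed time, the velocity along the trajectories is Lipschitz at a given label,
uniformly on short time intervals. -/
theorem exists_uniform_lipschitz_of_trajectories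
    {E G : Type*} [NormedAddCommGroup E] [NormedSpace ℝ E]
    [NormedAddCommGroup G] [NormedSpace ℝ G]
    {u : ℝ → E → E} {φ : ℝ → G → E} (hu : ContDiff ℝ 1 (Function.uncurry u))
    (hφt : ∀ t X, HasDerivAt (fun τ => φ τ X) (u t (φ t X)) t)
    {X : G} (hφ : ∀ t, DifferentiableAt ℝ (φ t) X) (t₀ : ℝ) :
    ∃ δ > 0, ∃ C, ∀ᶠ Y in 𝓝 X, ∀ τ ∈ Icc (t₀ - δ) (t₀ + δ),
      ‖u τ (φ τ Y) - u τ (φ τ X)‖ ≤ C * ‖Y - X‖ := by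
  set x₀ := φ t₀ X
  obtain ⟨K, N, hN, hK⟩ := (hu.contDiffAt (x := (t₀, x₀))).exists_lipschitzOnWith
  set M := ‖u t₀ x₀‖ + 1
  have hM : 0 < M := by positivity
  have hMe : ∀ᶠ p in 𝓝 (t₀, x₀), ‖Function.uncurry u p‖ < M :=
    hu.continuous.norm.continuousAt.eventually_lt_const (lt_add_one _)
  obtain ⟨r, hr, hball⟩ := Metric.mem_nhds_iff.1 (inter_mem hN hMe)
  rw [← ball_prod_same] at hball
  obtain ⟨δ₀, hδ₀, hclose⟩ := Metric.continuousAt_iff.1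
    (hφt t₀ X).continuousAt (r / 3) (by positivity)
  set δ := min (min (δ₀ / 2) (r / 2)) (r / (6 * M))
  have hδ : 0 < δ := by positivity
  have hδ₁ : δ ≤ δ₀ / 2 := (min_le_left _ _).trans (min_le_left _ _)
  have hδ₂ : δ ≤ r / 2 := (min_le_left _ _).trans (min_le_right _ _)
  have hδ₃ : M * (2 * δ) ≤ r / 3 := by
    have : δ ≤ r / (6 * M) := min_le_right _ _
    rw [le_div_iff₀ (by positivity)] at this
    linarith
  set a := t₀ - δ
  set b := t₀ + δ
  have htime : ∀ τ ∈ Icc a b, τ ∈ Metric.ball t₀ r := fun τ hτ => by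
    rw [Metric.mem_ball, Real.dist_eq, abs_lt]
    constructor <;> linarith [hτ.1, hτ.2]
  have hstay : ∀ Y, ‖φ a Y - x₀‖ < r / 3 → ∀ τ ∈ Icc a b, φ τ Y ∈ Metric.ball x₀ r := by
    intro Y hY τ hτ
    have hB : ∀ s ∈ Icc a b, r / 3 + M * (s - a) < r := fun s hs => by
      have : M * (s - a) ≤ M * (2 * δ) :=
        mul_le_mul_of_nonneg_left (by linarith [hs.2]) hM.le
      linarith
    have := image_norm_le_of_norm_deriv_right_lt_deriv_boundary (a := a) (b := b)
      (f := fun s => φ s Y - x₀) (f' := fun s => u s (φ s Y))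
      (B := fun s => r / 3 + M * (s - a)) (B' := fun _ => M)
      (fun s _ => ((hφt s Y).sub_const x₀).continuousAt.continuousWithinAt)
      (fun s _ => ((hφt s Y).sub_const x₀).hasDerivWithinAt)
      (by simpa using hY.le)
      (fun s => by simpa using (((hasDerivAt_id s).sub_const a).const_mul M).const_add (r / 3))
      (fun s hs h => by
        have hs' := Ico_subset_Icc_self hs
        refine (hball (mk_mem_prod (htime s hs') ?_)).2
        rw [mem_ball_iff_norm, h]
        exact hB s hs') hτ
    rw [mem_ball_iff_norm]
    exact this.trans_lt (hB τ hτ)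
  have haX : ‖φ a X - x₀‖ < r / 3 := by
    rw [← dist_eq_norm]
    refine hclose ?_
    rw [Real.dist_eq, abs_lt]
    constructor <;> linarith
  have hlip : ∀ t ∈ Icc a b, LipschitzOnWith K (u t) (Metric.ball x₀ r) := by
    intro t ht
    refine LipschitzOnWith.of_dist_le_mul fun x hx y hy => ?_
    have := hK.dist_le_mul (t, x) (hball (mk_mem_prod (htime t ht) hx)).1
      (t, y) (hball (mk_mem_prod (htime t ht) hy)).1
    simpa [Prod.dist_eq] using this
  obtain ⟨L, hL⟩ := (hφ a).hasFDerivAt.isBigO_sub.bound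
  refine ⟨δ, hδ, K * (L * Real.exp (K * (2 * δ))), ?_⟩
  have hnear : ∀ᶠ Y in 𝓝 X, ‖φ a Y - x₀‖ < r / 3 :=
    ((hφ a).continuousAt.sub continuousAt_const).norm.eventually_lt_const haX
  filter_upwards [hL, hnear] with Y hY hYn τ hτ
  have hgr := dist_le_of_trajectories_ODE_of_mem (v := u) (K := K) (a := a) (b := b)
    (f := fun s => φ s Y) (g := fun s => φ s X) (s := fun _ => Metric.ball x₀ r)
    (fun t ht => hlip t (Ico_subset_Icc_self ht))
    (fun s _ => (hφt s Y).continuousAt.continuousWithinAt)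
    (fun s _ => (hφt s Y).hasDerivWithinAt)
    (fun s hs => hstay Y hYn s (Ico_subset_Icc_self hs))
    (fun s _ => (hφt s X).continuousAt.continuousWithinAt)
    (fun s _ => (hφt s X).hasDerivWithinAt)
    (fun s hs => hstay X haX s (Ico_subset_Icc_self hs)) le_rfl τ hτ
  have hv := (hlip τ hτ).dist_le_mul _ (hstay Y hYn τ hτ) _ (hstay X haX τ hτ)
  rw [dist_eq_norm] at hv
  calc ‖u τ (φ τ Y) - u τ (φ τ X)‖
      ≤ K * dist (φ τ Y) (φ τ X) := hv
    _ ≤ K * ((L * ‖Y - X‖) * Real.exp (K * (2 * δ))) := by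
        refine mul_le_mul_of_nonneg_left (hgr.trans ?_) K.2
        rw [dist_eq_norm]
        refine mul_le_mul hY ?_ (Real.exp_nonneg _) ((norm_nonneg _).trans hY)
        exact Real.exp_le_exp.2 (mul_le_mul_of_nonneg_left (by linarith [hτ.2]) K.2)
    _ = K * (L * Real.exp (K * (2 * δ))) * ‖Y - X‖ := by ring

/-- The first variation of a family of trajectories of a `C¹` time-dependent vector field solves
the linearized equation. -/
theorem hasDerivAt_fderiv_apply_of_trajectories
    {E G : Type*} [NormedAddCommGroup E] [NormedSpace ℝ E] [CompleteSpace E]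
    [NormedAddCommGroup G] [NormedSpace ℝ G]
    {u : ℝ → E → E} {φ : ℝ → G → E} (hu : ContDiff ℝ 1 (Function.uncurry u))
    (hφt : ∀ t X, HasDerivAt (fun τ => φ τ X) (u t (φ t X)) t)
    {X : G} (hφ : ∀ t, DifferentiableAt ℝ (φ t) X) (t₀ : ℝ) (v : G) :
    HasDerivAt (fun τ => fderiv ℝ (φ τ) X v)
      (fderiv ℝ (u t₀) (φ t₀ X) (fderiv ℝ (φ t₀) X v)) t₀ := by
  obtain ⟨δ, hδ, C, hC⟩ := exists_uniform_lipschitz_of_trajectories hu hφt hφ t₀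
  set w : ℝ → E := fun τ => fderiv ℝ (φ τ) X v
  set g : ℝ → E := fun τ => fderiv ℝ (u τ) (φ τ X) (w τ)
  have hcurve : ∀ Y, Continuous fun τ => φ τ Y := fun Y =>
    continuous_iff_continuousAt.2 fun t => (hφt t Y).continuousAt
  have hvel : ∀ Y, Continuous fun τ => u τ (φ τ Y) := fun Y =>
    hu.continuous.comp (continuous_id.prodMk (hcurve Y))
  have hline : HasDerivAt (fun h : ℝ => X + h • v) v 0 := by
    simpa using ((hasDerivAt_id (0 : ℝ)).smul_const v).const_add X
  have hw : ∀ τ, HasDerivAt (fun h : ℝ => φ τ (X + h • v)) (w τ) 0 := fun τ =>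
    HasFDerivAt.comp_hasDerivAt (f := fun h : ℝ => X + h • v) (l := φ τ) (0 : ℝ)
      (by simpa using (hφ τ).hasFDerivAt) hline
  have hg : ∀ τ, HasDerivAt (fun h : ℝ => u τ (φ τ (X + h • v))) (g τ) 0 := fun τ => by
    have hd : DifferentiableAt ℝ (u τ) (φ τ X) :=
      (hu.comp (contDiff_const.prodMk contDiff_id)).differentiable one_ne_zero _
    exact HasFDerivAt.comp_hasDerivAt (f := fun h : ℝ => φ τ (X + h • v)) (l := u τ) (0 : ℝ)
      (by simpa using hd.hasFDerivAt) (hw τ)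
  have hbound : ∀ᶠ h in 𝓝[≠] (0 : ℝ), ∀ τ ∈ Icc (t₀ - δ) (t₀ + δ),
      ‖h⁻¹ • (u τ (φ τ (X + h • v)) - u τ (φ τ X))‖ ≤ C * ‖v‖ := by
    have ht : Tendsto (fun h : ℝ => X + h • v) (𝓝[≠] 0) (𝓝 X) := by
      simpa using hline.continuousAt.tendsto.mono_left nhdsWithin_le_nhds
    filter_upwards [ht.eventually hC, self_mem_nhdsWithin] with h hh (h0 : h ≠ 0) τ hτ
    have := hh τ hτ
    rw [norm_smul, norm_inv, inv_mul_le_iff₀ (norm_pos_iff.2 h0)]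
    simpa [norm_smul, mul_left_comm] using this
  have hgbound : ∀ τ ∈ Icc (t₀ - δ) (t₀ + δ), ‖g τ‖ ≤ C * ‖v‖ := fun τ hτ => by
    have := (hg τ).tendsto_slope_zero.norm
    refine le_of_tendsto this ?_
    filter_upwards [hbound] with h hh
    simpa using hh τ hτ
  have hftc : ∀ s ∈ Icc (t₀ - δ) (t₀ + δ), ∀ t ∈ Icc (t₀ - δ) (t₀ + δ),
      ∫ τ in s..t, g τ = w t - w s := by
    intro s hs t ht
    have hsub : uIoc s t ⊆ Icc (t₀ - δ) (t₀ + δ) := uIoc_subset_uIcc.trans (uIcc_subset_Icc hs ht)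
    have hcont : ∀ h : ℝ, Continuous fun τ => h⁻¹ • (u τ (φ τ (X + h • v)) - u τ (φ τ X)) :=
      fun h => ((hvel _).sub (hvel _)).const_smul _
    have hlim₁ : Tendsto (fun h : ℝ => ∫ τ in s..t, h⁻¹ • (u τ (φ τ (X + h • v)) - u τ (φ τ X)))
        (𝓝[≠] 0) (𝓝 (∫ τ in s..t, g τ)) := by
      refine intervalIntegral.tendsto_integral_filter_of_dominated_convergence
        (fun _ => C * ‖v‖) (Eventually.of_forall fun h => (hcont h).aestronglyMeasurable) ?_
        intervalIntegrable_const (Eventually.of_forall fun τ _ => ?_)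
      · filter_upwards [hbound] with h hh
        exact Eventually.of_forall fun τ hτ => hh τ (hsub hτ)
      · simpa using (hg τ).tendsto_slope_zero
    have hlim₂ : Tendsto (fun h : ℝ => ∫ τ in s..t, h⁻¹ • (u τ (φ τ (X + h • v)) - u τ (φ τ X)))
        (𝓝[≠] 0) (𝓝 (w t - w s)) := by
      have hprim : ∀ h : ℝ, ∫ τ in s..t, h⁻¹ • (u τ (φ τ (X + h • v)) - u τ (φ τ X)) =
          h⁻¹ • (φ t (X + h • v) - φ t X) - h⁻¹ • (φ s (X + h • v) - φ s X) := fun h =>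
        intervalIntegral.integral_eq_sub_of_hasDerivAt
          (fun τ _ => ((hφt τ _).sub (hφt τ _)).const_smul h⁻¹)
          ((hcont h).intervalIntegrable _ _)
      simp_rw [hprim]
      simpa using (hw t).tendsto_slope_zero.sub (hw s).tendsto_slope_zero
    exact tendsto_nhds_unique hlim₁ hlim₂
  have hwc : ContinuousOn w (Icc (t₀ - δ) (t₀ + δ)) := by
    refine (LipschitzOnWith.of_dist_le_mul (K := (C * ‖v‖).toNNReal) fun t ht s hs => ?_).continuousOn
    rw [dist_eq_norm, ← hftc s hs t ht, Real.dist_eq]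
    exact intervalIntegral.norm_integral_le_of_norm_le_const fun τ hτ =>
      (hgbound τ (uIoc_subset_uIcc.trans (uIcc_subset_Icc hs ht) hτ)).trans (Real.le_coe_toNNReal _)
  have hA : Continuous fun τ => fderiv ℝ (u τ) (φ τ X) :=
    (ContDiff.fderiv (f := fun p : ℝ × E => u p.1) (m := 1) (n := 0)
      (hu.comp (contDiff_fst.fst.prodMk contDiff_snd)) contDiff_snd (by simp)).continuous.comp
      (continuous_id.prodMk (hcurve X))
  have hgc : ContinuousOn g (Icc (t₀ - δ) (t₀ + δ)) := hA.continuousOn.clm_apply hwc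
  have hnhds : Ioo (t₀ - δ) (t₀ + δ) ∈ 𝓝 t₀ := Ioo_mem_nhds (by linarith) (by linarith)
  have ht₀ : t₀ ∈ Icc (t₀ - δ) (t₀ + δ) := ⟨by linarith, by linarith⟩
  have hder := (intervalIntegral.integral_hasDerivAt_right (a := t₀) (b := t₀) (f := g)
    (by simp)
    ((hgc.mono Ioo_subset_Icc_self).stronglyMeasurableAtFilter isOpen_Ioo _ (mem_of_mem_nhds hnhds))
    (hgc.continuousAt (mem_of_superset hnhds Ioo_subset_Icc_self))).const_add (w t₀)
  refine hder.congr_of_eventuallyEq ?_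
  filter_upwards [hnhds] with t ht
  rw [hftc t₀ ht₀ t (Ioo_subset_Icc_self ht)]
  abel

/-- A curve of continuous linear maps on a finite-dimensional space is differentiable if it is so
pointwise. -/
theorem hasDerivAt_clm_of_apply {E G : Type*} [NormedAddCommGroup E] [NormedSpace ℝ E]
    [NormedAddCommGroup G] [NormedSpace ℝ G] [FiniteDimensional ℝ G]
    {L : ℝ → G →L[ℝ] E} {L' : G →L[ℝ] E} {t : ℝ}
    (h : ∀ v, HasDerivAt (fun τ => L τ v) (L' v) t) : HasDerivAt L L' t := by
  let e := Module.finBasis ℝ G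
  have hexp : ∀ A : G →L[ℝ] E,
      A = ∑ i, (LinearMap.toContinuousLinearMap (e.coord i)).smulRight (A (e i)) := fun A => by
    ext v
    conv_lhs => rw [← e.sum_repr v]
    simp only [map_sum, map_smul, sum_apply, ContinuousLinearMap.smulRight_apply,
      LinearMap.coe_toContinuousLinearMap', Module.Basis.coord_apply]
  rw [hexp L', show L = _ from funext fun τ => hexp (L τ)]
  refine HasDerivAt.fun_sum fun i _ => ?_
  exact (ContinuousLinearMap.smulRightL ℝ G E
    (LinearMap.toContinuousLinearMap (e.coord i))).hasFDerivAt.comp_hasDerivAt t (h (e i))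

/-- `∂F/∂t (t, X) = D_x u(t, φ(t, X)) ∘ F(t, X)`. -/
theorem tangent_map_time_derivative
    (u φ : ℝ → E3 → E3)
    (F : ℝ → E3 → (E3 ≃L[ℝ] E3))
    (hu : ContDiff ℝ (⊤ : ℕ∞) (Function.uncurry u))
    (hφ0 : ∀ X, φ 0 X = X)
    (hφt : ∀ t X, HasDerivAt (fun τ => φ τ X) (u t (φ t X)) t)
    (hφsmooth : ∀ t, ContDiff ℝ (⊤ : ℕ∞) (φ t))
    (hφbij : ∀ t, Function.Bijective (φ t))
    (hφinv : ∀ t, ContDiff ℝ (⊤ : ℕ∞) (Function.invFun (φ t)))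
    (hF : ∀ t X, (F t X : E3 →L[ℝ] E3) = fderiv ℝ (φ t) X) :
    ∀ (X : E3) (t : ℝ),
      HasDerivAt (fun τ => (F τ X : E3 →L[ℝ] E3))
        ((fderiv ℝ (u t) (φ t X)).comp (F t X : E3 →L[ℝ] E3)) t := by
  intro X t
  have hu' : ContDiff ℝ 1 (Function.uncurry u) := hu.of_le (by exact_mod_cast le_top)
  simp_rw [hF]
  exact hasDerivAt_clm_of_apply fun v => hasDerivAt_fderiv_apply_of_trajectories hu' hφt
    (fun τ => (hφsmooth τ).differentiable (by simp) X) t v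
end
end

section
/- Let C : ℝ × E → (E →L[ℝ] ℝ) be a C¹ field of linear forms and define its Lie derivative d_L C (t, x) := ∂C/∂t(t, x) + D_x C(t, x)(u(t, x)) + C(t, x) ∘ D_x u(t, x). Then d_L C ≡ 0 if and only if C(t, φ(t, X)) ∘ F(t, X) = C(0, X) for all (t, X); i.e. a form field is moving with the fluid if and only if its pull-back by the tangent map F to the reference space is independent of time. -/
noncomputable section

local notation "E3" => EuclideanSpace ℝ (Fin 3)

open Set Filter Topology MeasureTheory

section FlowDerivative

variable {E : Type*} [NormedAddCommGroup E] [NormedSpace ℝ E]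

/-- A jointly `C¹` map is differentiable in its second variable, with a jointly continuous partial
derivative. -/
lemma hasFDerivAt_snd_of_contDiff_uncurry {G : Type*} [NormedAddCommGroup G] [NormedSpace ℝ G]
    {u : ℝ → E → G} (hu : ContDiff ℝ 1 (Function.uncurry u)) (t : ℝ) (x : E) :
    HasFDerivAt (u t)
      ((fderiv ℝ (Function.uncurry u) (t, x)).comp (ContinuousLinearMap.inr ℝ ℝ E)) x :=
  ((hu.differentiable one_ne_zero) (t, x)).hasFDerivAt.comp x (hasFDerivAt_prodMk_right t x)

lemma continuous_fderiv_snd_of_contDiff_uncurry {G : Type*} [NormedAddCommGroup G]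
    [NormedSpace ℝ G] {u : ℝ → E → G} (hu : ContDiff ℝ 1 (Function.uncurry u)) :
    Continuous fun p : ℝ × E => fderiv ℝ (u p.1) p.2 := by
  have h : (fun p : ℝ × E => fderiv ℝ (u p.1) p.2) = fun p : ℝ × E =>
      (fderiv ℝ (Function.uncurry u) p).comp (ContinuousLinearMap.inr ℝ ℝ E) :=
    funext fun p => (hasFDerivAt_snd_of_contDiff_uncurry hu p.1 p.2).fderiv
  rw [h]
  exact (hu.continuous_fderiv one_ne_zero).clm_comp continuous_const

/-- The velocity along a flow is Lipschitz in the initial condition at a given point, uniformly on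
`[0, T]`. -/
lemma exists_velocity_bound_Icc [ProperSpace E] {u φ : ℝ → E → E}
    (hu : ContDiff ℝ 1 (Function.uncurry u)) (hφ0 : ∀ X, φ 0 X = X)
    (hφt : ∀ t X, HasDerivAt (fun τ => φ τ X) (u t (φ t X)) t) (X : E) (T : ℝ) :
    ∃ M, ∀ᶠ Y in 𝓝 X, ∀ s ∈ Icc 0 T, ‖u s (φ s Y) - u s (φ s X)‖ ≤ M * ‖Y - X‖ := by
  have hγ : ∀ Y, Continuous fun s => φ s Y := fun Y =>
    continuous_iff_continuousAt.2 fun s => (hφt s Y).continuousAt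
  obtain ⟨K, hK⟩ : ∃ K, ∀ s ∈ Icc 0 T, ∀ z ∈ Metric.closedBall (0 : E) 1,
      ‖fderiv ℝ (u s) (φ s X + z)‖ ≤ K := by
    have hc : Continuous fun p : ℝ × E => fderiv ℝ (u p.1) (φ p.1 X + p.2) :=
      (continuous_fderiv_snd_of_contDiff_uncurry hu).comp
        (continuous_fst.prodMk (((hγ X).comp continuous_fst).add continuous_snd))
    obtain ⟨K, hK⟩ :=
      (isCompact_Icc.prod (isCompact_closedBall (0 : E) 1)).exists_bound_of_continuousOn
        (s := Icc 0 T ×ˢ Metric.closedBall (0 : E) 1) hc.continuousOn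
    exact ⟨K, fun s hs z hz => hK (s, z) ⟨hs, hz⟩⟩
  have hlip : ∀ s ∈ Icc 0 T, ∀ y, ‖y - φ s X‖ ≤ 1 →
      ‖u s y - u s (φ s X)‖ ≤ |K| * ‖y - φ s X‖ := by
    intro s hs y hy
    refine (convex_closedBall (φ s X) 1).norm_image_sub_le_of_norm_fderiv_le (𝕜 := ℝ)
      (fun x _ => (hasFDerivAt_snd_of_contDiff_uncurry hu s x).differentiableAt) ?_
      (Metric.mem_closedBall_self zero_le_one) (by simpa [dist_eq_norm] using hy)
    intro x hx
    have := hK s hs (x - φ s X) (by simpa [dist_eq_norm] using hx)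
    rw [add_sub_cancel] at this
    exact this.trans (le_abs_self K)
  set k := |K| + 1 with hk
  have hkpos : 0 < k := by positivity
  refine ⟨|K| * Real.exp (k * T), ?_⟩
  have hev : ∀ᶠ Y in 𝓝 X, ‖Y - X‖ * Real.exp (k * T) < 1 := by
    have hc : Continuous fun Y : E => ‖Y - X‖ * Real.exp (k * T) := by fun_prop
    exact hc.continuousAt.eventually_lt continuousAt_const (by simp)
  filter_upwards [hev] with Y hY
  rcases eq_or_ne Y X with rfl | hne
  · simp
  have hpos : 0 < ‖Y - X‖ := norm_sub_pos_iff.2 hne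
  have hle : ∀ s ∈ Icc 0 T, ‖Y - X‖ * Real.exp (k * s) ≤ ‖Y - X‖ * Real.exp (k * T) := by
    intro s hs
    have := hs.2
    gcongr
  have key : ∀ s ∈ Icc 0 T, ‖φ s Y - φ s X‖ ≤ ‖Y - X‖ * Real.exp (k * s) := by
    refine image_norm_le_of_norm_deriv_right_lt_deriv_boundary
      (f := fun s => φ s Y - φ s X) (f' := fun s => u s (φ s Y) - u s (φ s X))
      (B := fun s => ‖Y - X‖ * Real.exp (k * s))
      (B' := fun s => ‖Y - X‖ * (Real.exp (k * s) * k))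
      ((hγ Y).sub (hγ X)).continuousOn
      (fun s _ => ((hφt s Y).sub (hφt s X)).hasDerivWithinAt) (by simp [hφ0]) ?_ ?_
    · intro s
      simpa using (((hasDerivAt_id s).const_mul k).exp).const_mul ‖Y - X‖
    · intro s hs heq
      have hs' := Ico_subset_Icc_self hs
      have h1 := hlip s hs' (φ s Y) (heq.trans_le ((hle s hs').trans hY.le))
      rw [heq] at h1
      have h2 : 0 < ‖Y - X‖ * Real.exp (k * s) := by positivity
      calc _ ≤ _ := h1
        _ < _ := by rw [hk] at h2 ⊢; linarith
  intro s hs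
  have h1 := (key s hs).trans (hle s hs)
  calc _ ≤ |K| * ‖φ s Y - φ s X‖ := hlip s hs _ (h1.trans hY.le)
    _ ≤ |K| * (‖Y - X‖ * Real.exp (k * T)) := by gcongr
    _ = _ := by ring

lemma exists_velocity_bound_uIcc [ProperSpace E] {u φ : ℝ → E → E}
    (hu : ContDiff ℝ 1 (Function.uncurry u)) (hφ0 : ∀ X, φ 0 X = X)
    (hφt : ∀ t X, HasDerivAt (fun τ => φ τ X) (u t (φ t X)) t) (X : E) (T : ℝ) :
    ∃ M, ∀ᶠ Y in 𝓝 X, ∀ s ∈ uIcc 0 T, ‖u s (φ s Y) - u s (φ s X)‖ ≤ M * ‖Y - X‖ := by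
  rcases le_total 0 T with hT | hT
  · rw [uIcc_of_le hT]
    exact exists_velocity_bound_Icc hu hφ0 hφt X T
  · have hu' : ContDiff ℝ 1 (Function.uncurry fun t x => -u (-t) x) :=
      (hu.comp (contDiff_fst.neg.prodMk contDiff_snd)).neg
    obtain ⟨M, hM⟩ := exists_velocity_bound_Icc (φ := fun t => φ (-t)) hu' (by simpa using hφ0)
      (fun t Y => by simpa [Function.comp_def] using (hφt (-t) Y).scomp t (hasDerivAt_neg t)) X (-T)
    refine ⟨M, hM.mono fun Y hY s hs => ?_⟩
    rw [uIcc_of_ge hT] at hs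
    have := hY (-s) ⟨by linarith [hs.2], by linarith [hs.1]⟩
    simpa [neg_add_eq_sub, norm_sub_rev] using this

/-- The spatial derivative of a flow solves the linearized equation. -/
theorem hasDerivAt_fderiv_flow [ProperSpace E] {u φ : ℝ → E → E}
    (hu : ContDiff ℝ 1 (Function.uncurry u)) (hφ0 : ∀ X, φ 0 X = X)
    (hφt : ∀ t X, HasDerivAt (fun τ => φ τ X) (u t (φ t X)) t)
    (hφ : ∀ t, Differentiable ℝ (φ t)) (X v : E) (t : ℝ) :
    HasDerivAt (fun τ => fderiv ℝ (φ τ) X v) (fderiv ℝ (u t) (φ t X) (fderiv ℝ (φ t) X v)) t := by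
  have hγ : ∀ Y, Continuous fun s => φ s Y := fun Y =>
    continuous_iff_continuousAt.2 fun s => (hφt s Y).continuousAt
  have hcont : ∀ Y, Continuous fun s => u s (φ s Y) := fun Y =>
    hu.continuous.comp (continuous_id.prodMk (hγ Y))
  have hint : ∀ Y t, φ t Y = Y + ∫ s in (0 : ℝ)..t, u s (φ s Y) := by
    intro Y t
    rw [intervalIntegral.integral_eq_sub_of_hasDerivAt (fun s _ => hφt s Y)
      ((hcont Y).intervalIntegrable _ _), hφ0, add_sub_cancel]
  set q : ℝ → ℝ → E := fun c s => c • (u s (φ s (X + c⁻¹ • v)) - u s (φ s X)) with hq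
  set g : ℝ → E := fun s => fderiv ℝ (u s) (φ s X) (fderiv ℝ (φ s) X v) with hg
  have hqc : ∀ c, Continuous (q c) := fun c => ((hcont _).sub (hcont _)).const_smul c
  have hlim : ∀ s, Tendsto (fun c => q c s) atTop (𝓝 (g s)) := fun s =>
    ((hasFDerivAt_snd_of_contDiff_uncurry hu s (φ s X)).differentiableAt.hasFDerivAt.comp X
      (hφ s X).hasFDerivAt).lim_real v
  have hmeas : AEStronglyMeasurable g volume :=
    aestronglyMeasurable_of_tendsto_ae atTop (fun c => (hqc c).aestronglyMeasurable)
      (Eventually.of_forall hlim)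
  have hbound : ∀ T, ∃ M, ∀ᶠ c in atTop, ∀ s ∈ uIcc 0 T, ‖q c s‖ ≤ M := by
    intro T
    obtain ⟨M, hM⟩ := exists_velocity_bound_uIcc hu hφ0 hφt X T
    have hto : Tendsto (fun c : ℝ => X + c⁻¹ • v) atTop (𝓝 X) := by
      simpa using ((tendsto_inv_atTop_zero (𝕜 := ℝ)).smul_const v).const_add X
    refine ⟨M * ‖v‖, ?_⟩
    filter_upwards [hto.eventually hM, eventually_gt_atTop 0] with c hc hc0 s hs
    have h1 := hc s hs
    rw [add_sub_cancel_left, norm_smul, norm_inv, Real.norm_of_nonneg hc0.le] at h1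
    rw [hq, norm_smul, Real.norm_of_nonneg hc0.le]
    calc _ ≤ c * (M * (c⁻¹ * ‖v‖)) := by gcongr
      _ = _ := by field_simp
  have hgint0 : ∀ T, IntervalIntegrable g volume 0 T := by
    intro T
    obtain ⟨M, hM⟩ := hbound T
    refine (intervalIntegrable_const (c := M)).mono_fun hmeas.restrict ?_
    refine (ae_restrict_mem measurableSet_uIoc).mono fun s hs => ?_
    exact (le_of_tendsto (hlim s).norm (hM.mono fun c hc => hc s (uIoc_subset_uIcc hs))).trans
      (le_abs_self M)
  have hJ : ∀ T, fderiv ℝ (φ T) X v = v + ∫ s in (0 : ℝ)..T, g s := by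
    intro T
    obtain ⟨M, hM⟩ := hbound T
    have h1 : Tendsto (fun c => ∫ s in (0 : ℝ)..T, q c s) atTop (𝓝 (∫ s in (0 : ℝ)..T, g s)) :=
      intervalIntegral.tendsto_integral_filter_of_dominated_convergence (fun _ => M)
        (Eventually.of_forall fun c => (hqc c).aestronglyMeasurable)
        (hM.mono fun c hc => Eventually.of_forall fun s hs => hc s (uIoc_subset_uIcc hs))
        intervalIntegrable_const (Eventually.of_forall fun s _ => hlim s)
    refine tendsto_nhds_unique ((hφ T X).hasFDerivAt.lim_real v) ((h1.const_add v).congr' ?_)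
    filter_upwards [eventually_ne_atTop 0] with c hc
    rw [hint (X + c⁻¹ • v) T, hint X T, hq, intervalIntegral.integral_smul,
      intervalIntegral.integral_sub ((hcont _).intervalIntegrable _ _)
        ((hcont _).intervalIntegrable _ _), add_sub_add_comm, add_sub_cancel_left, smul_add,
      smul_inv_smul₀ hc]
  have hJc : Continuous fun τ => fderiv ℝ (φ τ) X v := by
    simp_rw [hJ]
    exact continuous_const.add (intervalIntegral.continuous_primitive
      (fun a b => (hgint0 a).symm.trans (hgint0 b)) 0)
  have hgc : Continuous g :=
    ((continuous_fderiv_snd_of_contDiff_uncurry hu).comp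
      (continuous_id.prodMk (hγ X))).clm_apply hJc
  have := (hgc.integral_hasStrictDerivAt 0 t).hasDerivAt.const_add v
  exact (funext hJ : (fun τ => fderiv ℝ (φ τ) X v) = _) ▸ this

/-- The time derivative of the pull-back of a form field by a flow is the pull-back of its Lie
derivative. -/
theorem hasDerivAt_pullback_flow [ProperSpace E] {u φ : ℝ → E → E}
    (hu : ContDiff ℝ 1 (Function.uncurry u)) (hφ0 : ∀ X, φ 0 X = X)
    (hφt : ∀ t X, HasDerivAt (fun τ => φ τ X) (u t (φ t X)) t)
    (hφ : ∀ t, Differentiable ℝ (φ t)) {C : ℝ → E → (E →L[ℝ] ℝ)}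
    (hC : ContDiff ℝ 1 (Function.uncurry C)) (X v : E) (t : ℝ) :
    HasDerivAt (fun τ => C τ (φ τ X) (fderiv ℝ (φ τ) X v))
      ((deriv (fun τ => C τ (φ t X)) t + fderiv ℝ (C t) (φ t X) (u t (φ t X))
        + (C t (φ t X)).comp (fderiv ℝ (u t) (φ t X))) (fderiv ℝ (φ t) X v)) t := by
  have hD := ((hC.differentiable one_ne_zero) (t, φ t X)).hasFDerivAt
  have h1 : deriv (fun τ => C τ (φ t X)) t
      = fderiv ℝ (Function.uncurry C) (t, φ t X) (1, 0) :=
    (HasFDerivAt.comp_hasDerivAt (f := fun τ => (τ, φ t X)) t hD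
      ((hasDerivAt_id t).prodMk (hasDerivAt_const t (φ t X)))).deriv
  have h2 : fderiv ℝ (C t) (φ t X) (u t (φ t X))
      = fderiv ℝ (Function.uncurry C) (t, φ t X) (0, u t (φ t X)) := by
    rw [(hasFDerivAt_snd_of_contDiff_uncurry hC t (φ t X)).fderiv]
    rfl
  have h3 : HasDerivAt (fun τ => C τ (φ τ X))
      (fderiv ℝ (Function.uncurry C) (t, φ t X) (1, u t (φ t X))) t :=
    HasFDerivAt.comp_hasDerivAt (f := fun τ => (τ, φ τ X)) t hD
      ((hasDerivAt_id t).prodMk (hφt t X))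
  have h4 := h3.clm_apply (hasDerivAt_fderiv_flow hu hφ0 hφt hφ X v t)
  refine h4.congr_deriv ?_
  rw [h1, h2, ← map_add]
  simp

end FlowDerivative

/-- A form field is moving with the fluid (zero Lie derivative)
iff its pull-back by the tangent map `F` is independent of time. -/
theorem form_field_moving_with_fluid_iff
    (u φ : ℝ → E3 → E3)
    (F : ℝ → E3 → (E3 ≃L[ℝ] E3))
    (hu : ContDiff ℝ (⊤ : ℕ∞) (Function.uncurry u))
    (hφ0 : ∀ X, φ 0 X = X)
    (hφt : ∀ t X, HasDerivAt (fun τ => φ τ X) (u t (φ t X)) t)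
    (hφsmooth : ∀ t, ContDiff ℝ (⊤ : ℕ∞) (φ t))
    (hφbij : ∀ t, Function.Bijective (φ t))
    (hφinv : ∀ t, ContDiff ℝ (⊤ : ℕ∞) (Function.invFun (φ t)))
    (hF : ∀ t X, (F t X : E3 →L[ℝ] E3) = fderiv ℝ (φ t) X)
    (C : ℝ → E3 → (E3 →L[ℝ] ℝ))
    (hC : ContDiff ℝ 1 (Function.uncurry C)) :
    (∀ t x, deriv (fun τ => C τ x) t + fderiv ℝ (C t) x (u t x)
        + (C t x).comp (fderiv ℝ (u t) x) = 0) ↔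
      (∀ t X, (C t (φ t X)).comp (F t X : E3 →L[ℝ] E3) = C 0 X) := by
  have hd := hasDerivAt_pullback_flow (hu.of_le (by exact_mod_cast le_top)) hφ0 hφt
    (fun t => (hφsmooth t).differentiable (by simp)) hC
  constructor
  · intro h t X
    ext v
    have h0 : φ 0 = id := funext hφ0
    have hconst := is_const_of_deriv_eq_zero (fun s => (hd X v s).differentiableAt)
      (fun s => by rw [(hd X v s).deriv, h]; rfl) t 0
    simpa [hF, h0] using hconst
  · intro h t x
    obtain ⟨X, rfl⟩ := (hφbij t).2 x
    ext w
    obtain ⟨v, rfl⟩ := (F t X).surjective w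
    have hc : (fun τ => C τ (φ τ X) (fderiv ℝ (φ τ) X v)) = fun _ => C 0 X v := by
      funext τ
      rw [← h τ X, ← hF]
      rfl
    have hv := hd X v t
    rw [hc, ← hF] at hv
    exact hv.unique (hasDerivAt_const t _)
end
end

section
/- Let C : ℝ × E → (E →L[ℝ] ℝ) be a C¹ field of linear forms. Then the Lie derivative d_L C (t, x) := ∂C/∂t(t, x) + D_x C(t, x)(u(t, x)) + C(t, x) ∘ D_x u(t, x) vanishes identically if and only if for every C¹ vector field J : ℝ × E → E whose Lie derivative d_L J (t, x) := ∂J/∂t(t, x) + D_x J(t, x)(u(t, x)) − D_x u(t, x)(J(t, x)) vanishes identically, and for every X ∈ E, the scalar t ↦ C(t, φ(t, X))(J(t, φ(t, X))) is constant in t. -/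
noncomputable section

local notation "E3" => EuclideanSpace ℝ (Fin 3)

section Flow

open Set Filter Topology Metric Function
open scoped NNReal

variable {V : Type*} [NormedAddCommGroup V] [NormedSpace ℝ V]

/-- Chain rule along a curve, split into the partial time and space derivatives. -/
theorem hasDerivAt_along_curve {G : Type*} [NormedAddCommGroup G] [NormedSpace ℝ G]
    {f : ℝ → V → G} (hf : ContDiff ℝ 1 (uncurry f)) {c : ℝ → V} {c' : V} {t : ℝ}
    (hc : HasDerivAt c c' t) :
    HasDerivAt (fun τ => f τ (c τ))
      (deriv (fun τ => f τ (c t)) t + fderiv ℝ (f t) (c t) c') t := by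
  have hd : HasFDerivAt (uncurry f) (fderiv ℝ (uncurry f) (t, c t)) (t, c t) :=
    (hf.differentiable one_ne_zero _).hasFDerivAt
  have h1 : HasDerivAt (fun τ => f τ (c t)) (fderiv ℝ (uncurry f) (t, c t) (1, 0)) t :=
    hd.comp_hasDerivAt_of_eq t ((hasDerivAt_id t).prodMk (hasDerivAt_const t (c t))) rfl
  have h2 : HasFDerivAt (f t) ((fderiv ℝ (uncurry f) (t, c t)).comp
      ((0 : V →L[ℝ] ℝ).prod (ContinuousLinearMap.id ℝ V))) (c t) :=
    HasFDerivAt.comp (c t) hd ((hasFDerivAt_const t (c t)).prodMk (hasFDerivAt_id (c t)))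
  have h3 : HasDerivAt (fun τ => f τ (c τ)) (fderiv ℝ (uncurry f) (t, c t) (1, c')) t :=
    hd.comp_hasDerivAt_of_eq t ((hasDerivAt_id t).prodMk hc) rfl
  convert h3 using 1
  rw [h1.deriv, h2.fderiv]
  simp [← map_add]

/-- Differentiating a time-dependent field in space costs one order of joint smoothness. -/
theorem contDiff_fderiv_uncurry_apply {G : Type*} [NormedAddCommGroup G] [NormedSpace ℝ G]
    {f : ℝ → V → G} {m n : WithTop ℕ∞} (hf : ContDiff ℝ n (uncurry f)) (hmn : m + 1 ≤ n) :
    ContDiff ℝ m (fun p : ℝ × V × V => fderiv ℝ (f p.1) p.2.1 p.2.2) := by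
  have h : ContDiff ℝ m (fun p : ℝ × V × V => fderiv ℝ (f p.1) p.2.1) := by
    refine ContDiff.fderiv (f := fun p : ℝ × V × V => f p.1) ?_ contDiff_snd.fst hmn
    exact hf.comp (contDiff_fst.fst.prodMk contDiff_snd)
  exact h.clm_apply contDiff_snd.snd

/-- The velocity field induced by `u` on the tangent bundle. -/
def tangentField (u : ℝ → V → V) (t : ℝ) (p : V × V) : V × V :=
  (u t p.1, fderiv ℝ (u t) p.1 p.2)

theorem contDiff_uncurry_tangentField {u : ℝ → V → V} {m n : WithTop ℕ∞}
    (hu : ContDiff ℝ n (uncurry u))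
    (hmn : m + 1 ≤ n) : ContDiff ℝ m (uncurry (tangentField u)) :=
  ((hu.of_le (le_self_add.trans hmn)).comp (contDiff_fst.prodMk contDiff_snd.fst)).prodMk
    (contDiff_fderiv_uncurry_apply hu hmn)

theorem contDiff_tangentField_slice {u : ℝ → V → V} {m n : WithTop ℕ∞} {t : ℝ}
    (hu : ContDiff ℝ n (u t))
    (hmn : m + 1 ≤ n) : ContDiff ℝ m (tangentField u t) :=
  ((hu.of_le (le_self_add.trans hmn)).comp contDiff_fst).prodMk
    (hu.contDiff_fderiv_apply hmn)

section FiniteDim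

variable [FiniteDimensional ℝ V] {u : ℝ → V → V}

theorem exists_lipschitzOnWith_Icc_closedBall (hu : ContDiff ℝ 1 (uncurry u)) (a b : ℝ) (x : V)
    (R : ℝ) : ∃ K, ∀ t ∈ Icc a b, LipschitzOnWith K (u t) (closedBall x R) := by
  have := FiniteDimensional.proper_real V
  obtain ⟨K, hK⟩ := (hu.contDiffOn (s := Icc a b ×ˢ closedBall x R)).exists_lipschitzOnWith
    one_ne_zero ((convex_Icc a b).prod (convex_closedBall x R))
    (isCompact_Icc.prod (isCompact_closedBall x R))
  refine ⟨K, fun t ht y hy z hz => ?_⟩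
  simpa [Prod.edist_eq] using! hK (x := (t, y)) ⟨ht, hy⟩ (y := (t, z)) ⟨ht, hz⟩

theorem eqOn_Icc_of_hasDerivAt (hu : ContDiff ℝ 1 (uncurry u)) {f g : ℝ → V} {a b t₀ : ℝ}
    (ht : t₀ ∈ Ioo a b) (hf : ContinuousOn f (Icc a b))
    (hf' : ∀ t ∈ Ioo a b, HasDerivAt f (u t (f t)) t) (hg : ContinuousOn g (Icc a b))
    (hg' : ∀ t ∈ Ioo a b, HasDerivAt g (u t (g t)) t) (h : f t₀ = g t₀) :
    EqOn f g (Icc a b) := by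
  obtain ⟨R, hR⟩ := ((isCompact_Icc.image_of_continuousOn hf).union
    (isCompact_Icc.image_of_continuousOn hg)).isBounded.subset_closedBall 0
  obtain ⟨K, hK⟩ := exists_lipschitzOnWith_Icc_closedBall hu a b 0 R
  exact ODE_solution_unique_of_mem_Icc (s := fun _ => closedBall 0 R)
    (fun t ht => hK t (Ioo_subset_Icc_self ht)) ht hf hf'
    (fun t ht => hR (.inl (mem_image_of_mem f (Ioo_subset_Icc_self ht)))) hg hg'
    (fun t ht => hR (.inr (mem_image_of_mem g (Ioo_subset_Icc_self ht)))) h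

/-- Local solutions of a `C¹` equation depend on the initial value in a Lipschitz way. -/
theorem exists_lipschitz_local_flow (hu : ContDiff ℝ 1 (uncurry u)) (t₀ : ℝ) (x₀ : V) :
    ∃ ε > 0, ∃ r > 0, ∃ (K : ℝ≥0) (α : V → ℝ → V),
      (∀ x ∈ closedBall x₀ r, α x t₀ = x ∧ ∀ t ∈ Icc (t₀ - ε) (t₀ + ε),
        HasDerivWithinAt (α x) (u t (α x t)) (Icc (t₀ - ε) (t₀ + ε)) t) ∧
      ∀ t ∈ Icc (t₀ - ε) (t₀ + ε), LipschitzOnWith K (α · t) (closedBall x₀ r) := by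
  have := FiniteDimensional.proper_real V
  obtain ⟨K, hK⟩ := exists_lipschitzOnWith_Icc_closedBall hu (t₀ - 1) (t₀ + 1) x₀ 1
  obtain ⟨L, hL⟩ := ((isCompact_Icc (a := t₀ - 1) (b := t₀ + 1)).prod
    (isCompact_closedBall x₀ 1)).exists_bound_of_continuousOn hu.continuous.continuousOn
  set M : ℝ≥0 := L.toNNReal
  have hε : 0 < min 1 (1 / 2 / ((M : ℝ) + 1)) := by positivity
  set ε := min 1 (1 / 2 / ((M : ℝ) + 1))
  have hε1 : ε ≤ 1 := min_le_left _ _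
  have hsub : Icc (t₀ - ε) (t₀ + ε) ⊆ Icc (t₀ - 1) (t₀ + 1) :=
    Icc_subset_Icc (by linarith) (by linarith)
  have hpl : IsPicardLindelof u (tmin := t₀ - ε) (tmax := t₀ + ε)
      ⟨t₀, by simp [hε.le]⟩ x₀ 1 (1 / 2) M K :=
    { lipschitzOnWith := fun t ht => by simpa using hK t (hsub ht)
      continuousOn := fun x _ =>
        (hu.continuous.comp (continuous_id.prodMk continuous_const)).continuousOn
      norm_le := fun t ht x hx =>
        (hL (t, x) ⟨hsub ht, by simpa using hx⟩).trans (Real.le_coe_toNNReal L)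
      mul_max_le := by
        have h1 : ε ≤ 1 / 2 / ((M : ℝ) + 1) := min_le_right _ _
        rw [le_div_iff₀ (by positivity)] at h1
        simp only [add_sub_cancel_left, sub_sub_cancel, max_self, NNReal.coe_one,
          NNReal.coe_div, NNReal.coe_ofNat]
        nlinarith }
  obtain ⟨α, hα, K', hK'⟩ :=
    hpl.exists_forall_mem_closedBall_eq_hasDerivWithinAt_lipschitzOnWith
  exact ⟨ε, hε, ((1 / 2 : ℝ≥0) : ℝ), by norm_num, K', α, hα, hK'⟩

variable {φ : ℝ → V → V}

/-- A global flow of a `C¹` field whose time slices are locally Lipschitz is Lipschitz in space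
locally uniformly in time. -/
theorem exists_lipschitzOnWith_flow (hu : ContDiff ℝ 1 (uncurry u))
    (hφ : ∀ t X, HasDerivAt (fun τ => φ τ X) (u t (φ t X)) t)
    (hlip : ∀ t, LocallyLipschitz (φ t)) (t₀ : ℝ) (X₀ : V) :
    ∃ K, ∃ I ∈ 𝓝 t₀, ∃ s ∈ 𝓝 X₀, ∀ t ∈ I, LipschitzOnWith K (φ t) s := by
  obtain ⟨ε, hε, r, hr, K, α, hα, hK⟩ := exists_lipschitz_local_flow hu t₀ (φ t₀ X₀)
  obtain ⟨K', s, hs, hK'⟩ := hlip t₀ X₀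
  refine ⟨K * K', Icc (t₀ - ε) (t₀ + ε), Icc_mem_nhds (by linarith) (by linarith),
    s ∩ φ t₀ ⁻¹' closedBall (φ t₀ X₀) r,
    inter_mem hs ((hlip t₀).continuous.continuousAt (closedBall_mem_nhds _ hr)), fun t ht => ?_⟩
  have heq : EqOn (φ t) (fun X => α (φ t₀ X) t) (s ∩ φ t₀ ⁻¹' closedBall (φ t₀ X₀) r) := by
    rintro X ⟨-, hX⟩
    obtain ⟨h0, hd⟩ := hα _ hX
    refine eqOn_Icc_of_hasDerivAt hu (t₀ := t₀) ⟨by linarith, by linarith⟩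
      (fun τ _ => (hφ τ X).continuousAt.continuousWithinAt) (fun τ _ => hφ τ X)
      (fun τ hτ => (hd τ hτ).continuousWithinAt)
      (fun τ hτ => (hd τ (Ioo_subset_Icc_self hτ)).hasDerivAt (Icc_mem_nhds hτ.1 hτ.2))
      h0.symm ht
  intro X hX Y hY
  rw [heq hX, heq hY]
  exact ((hK t ht).comp (hK'.mono inter_subset_left) (fun X hX => hX.2)) hX hY

theorem continuous_uncurry_flow (hu : ContDiff ℝ 1 (uncurry u))
    (hφ : ∀ t X, HasDerivAt (fun τ => φ τ X) (u t (φ t X)) t)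
    (hlip : ∀ t, LocallyLipschitz (φ t)) : Continuous (uncurry φ) := by
  rw [continuous_iff_continuousAt]
  rintro ⟨t₀, X₀⟩
  obtain ⟨K, I, hI, s, hs, hK⟩ := exists_lipschitzOnWith_flow hu hφ hlip t₀ X₀
  exact (continuousOn_prod_of_continuousOn_lipschitzOnWith' _ K hK
    fun X _ t _ => (hφ t X).continuousAt.continuousWithinAt).continuousAt (prod_mem_nhds hI hs)

theorem hasDerivAt_fderiv_flow_s5 (hu : ContDiff ℝ 1 (uncurry u))
    (hφ : ∀ t X, HasDerivAt (fun τ => φ τ X) (u t (φ t X)) t)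
    (hφ₁ : ∀ t, ContDiff ℝ 1 (φ t)) (t₀ : ℝ) (X₀ : V) :
    HasDerivAt (fun τ => fderiv ℝ (φ τ) X₀)
      ((fderiv ℝ (u t₀) (φ t₀ X₀)).comp (fderiv ℝ (φ t₀) X₀)) t₀ := by
  borelize V
  have := FiniteDimensional.proper_real V
  have : ProperSpace (V →L[ℝ] V) := FiniteDimensional.proper_real _
  have hcont : Continuous (uncurry φ) :=
    continuous_uncurry_flow hu hφ fun t => (hφ₁ t).locallyLipschitz
  have hcurve (X : V) : Continuous fun t => φ t X :=
    hcont.comp (continuous_id.prodMk continuous_const)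
  have hvel (X : V) : Continuous fun t => u t (φ t X) :=
    hu.continuous.comp (continuous_id.prodMk (hcurve X))
  have hDu : Continuous fun t => fderiv ℝ (u t) (φ t X₀) := by
    have h : Continuous fun p : ℝ × V => fderiv ℝ (u p.1) p.2 := by
      refine (ContDiff.fderiv (f := fun p : ℝ × V => u p.1) (m := 1) (n := 0) ?_ contDiff_snd
        (by norm_num)).continuous
      exact hu.comp (contDiff_fst.fst.prodMk contDiff_snd)
    exact h.comp (continuous_id.prodMk (hcurve X₀))
  set A : ℝ → V →L[ℝ] V := fun t => (fderiv ℝ (u t) (φ t X₀)).comp (fderiv ℝ (φ t) X₀)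
  have hAmeas : MeasureTheory.StronglyMeasurable A := by
    have h : Measurable fun t => fderiv ℝ (φ t) X₀ :=
      (measurable_fderiv_with_param ℝ hcont).comp measurable_prodMk_right
    exact isBoundedBilinearMap_comp.continuous.comp_stronglyMeasurable
      (hDu.stronglyMeasurable.prodMk h.stronglyMeasurable)
  obtain ⟨K, I, hI, s, hs, hK⟩ :=
    exists_lipschitzOnWith_flow hu hφ (fun t => (hφ₁ t).locallyLipschitz) t₀ X₀
  obtain ⟨K', N, hN, hK'⟩ := hu.locallyLipschitz (t₀, φ t₀ X₀)
  have hpre : (fun p : ℝ × V => (p.1, φ p.1 p.2)) ⁻¹' N ∈ 𝓝 (t₀, X₀) :=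
    (continuous_fst.prodMk hcont).continuousAt hN
  obtain ⟨I', hI', s', hs', hsub⟩ := mem_nhds_prod_iff.1 hpre
  obtain ⟨ε, hε, hball⟩ := Metric.nhds_basis_closedBall.mem_iff.1 (inter_mem hI hI')
  rw [Real.closedBall_eq_Icc] at hball
  have hlip : ∀ t ∈ Icc (t₀ - ε) (t₀ + ε),
      LipschitzOnWith (K' * K) (fun X => u t (φ t X)) (s ∩ s') := by
    intro t ht X hX Y hY
    have hmem : ∀ Z ∈ s ∩ s', (t, φ t Z) ∈ N := fun Z hZ =>
      hsub (mk_mem_prod (hball ht).2 hZ.2)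
    have h := hK' (hmem X hX) (hmem Y hY)
    simp only [uncurry_apply_pair, Prod.edist_eq, edist_self, zero_le, sup_of_le_right] at h
    refine h.trans ?_
    rw [ENNReal.coe_mul, mul_assoc]
    gcongr
    exact hK t (hball ht).1 hX.1 hY.1
  have hFint : ∀ t ∈ Icc (t₀ - ε) (t₀ + ε), IntervalIntegrable A MeasureTheory.volume t₀ t ∧
      fderiv ℝ (φ t) X₀ = fderiv ℝ (φ t₀) X₀ + ∫ τ in t₀..t, A τ := by
    intro t ht
    have huIcc : Set.uIoc t₀ t ⊆ Icc (t₀ - ε) (t₀ + ε) :=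
      uIoc_subset_uIcc.trans (uIcc_subset_Icc ⟨by linarith, by linarith⟩ ht)
    obtain ⟨h1, h2⟩ := intervalIntegral.hasFDerivAt_integral_of_dominated_loc_of_lip
      (μ := MeasureTheory.volume) (a := t₀) (b := t) (F := fun X τ => u τ (φ τ X)) (F' := A)
      (x₀ := X₀) (s := s ∩ s') (bound := fun _ => ((K' * K : ℝ≥0) : ℝ)) (inter_mem hs hs')
      (Eventually.of_forall fun X => (hvel X).aestronglyMeasurable)
      ((hvel X₀).intervalIntegrable _ _) hAmeas.aestronglyMeasurable
      (Eventually.of_forall fun τ hτ => by simpa using hlip τ (huIcc hτ))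
      intervalIntegrable_const
      (Eventually.of_forall fun τ _ => by
        have hd : DifferentiableAt ℝ (u τ) (φ τ X₀) :=
          (hu.comp (contDiff_const.prodMk contDiff_id)).differentiable one_ne_zero _
        exact hd.hasFDerivAt.comp X₀ ((hφ₁ τ).differentiable one_ne_zero X₀).hasFDerivAt)
    refine ⟨h1, ?_⟩
    have heq : φ t = fun X => φ t₀ X + ∫ τ in t₀..t, u τ (φ τ X) := by
      ext1 X
      rw [intervalIntegral.integral_eq_sub_of_hasDerivAt (fun τ _ => hφ τ X)
        ((hvel X).intervalIntegrable _ _)]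
      abel
    rw [heq]
    exact (((hφ₁ t₀).differentiable one_ne_zero X₀).hasFDerivAt.add h2).fderiv
  have hleft : t₀ - ε ∈ Icc (t₀ - ε) (t₀ + ε) := ⟨le_rfl, by linarith⟩
  have hright : t₀ + ε ∈ Icc (t₀ - ε) (t₀ + ε) := ⟨by linarith, le_rfl⟩
  have hIcc : Icc (t₀ - ε) (t₀ + ε) ∈ 𝓝 t₀ := Icc_mem_nhds (by linarith) (by linarith)
  have hev : (fun τ => fderiv ℝ (φ τ) X₀) =ᶠ[𝓝 t₀]
      fun t => fderiv ℝ (φ t₀) X₀ + ∫ τ in t₀..t, A τ := by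
    filter_upwards [hIcc] with t ht using (hFint t ht).2
  have hFcont : ContinuousAt (fun τ => fderiv ℝ (φ τ) X₀) t₀ := by
    have h := intervalIntegral.continuousOn_primitive_interval' (a := t₀)
      ((hFint _ hleft).1.symm.trans (hFint _ hright).1)
      (by rw [uIcc_of_le (by linarith)]; exact ⟨by linarith, by linarith⟩)
    rw [uIcc_of_le (by linarith)] at h
    exact (continuousAt_const.add (h.continuousAt hIcc)).congr hev.symm
  have hAcont : ContinuousAt A t₀ := hDu.continuousAt.clm_comp hFcont
  exact ((intervalIntegral.integral_hasDerivAt_right IntervalIntegrable.refl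
    hAmeas.stronglyMeasurableAtFilter hAcont).const_add _).congr_of_eventuallyEq hev

theorem hasDerivAt_tangentField_flow (hu : ContDiff ℝ 1 (uncurry u))
    (hφ : ∀ t X, HasDerivAt (fun τ => φ τ X) (u t (φ t X)) t)
    (hφ₁ : ∀ t, ContDiff ℝ 1 (φ t)) (t : ℝ) (p : V × V) :
    HasDerivAt (fun τ => tangentField φ τ p) (tangentField u t (tangentField φ t p)) t :=
  (hφ t p.1).prodMk <| by
    simpa [tangentField] using (hasDerivAt_fderiv_flow_s5 hu hφ hφ₁ t p.1).clm_apply (hasDerivAt_const t p.2)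

theorem contDiff_one_uncurry_flow (hu : ContDiff ℝ 2 (uncurry u))
    (hφ : ∀ t X, HasDerivAt (fun τ => φ τ X) (u t (φ t X)) t)
    (hφ₂ : ∀ t, ContDiff ℝ 2 (φ t)) : ContDiff ℝ 1 (uncurry φ) := by
  have hu₁ : ContDiff ℝ 1 (uncurry u) := hu.of_le one_le_two
  have hφ₁ (t : ℝ) : ContDiff ℝ 1 (φ t) := (hφ₂ t).of_le one_le_two
  have htan : Continuous (uncurry (tangentField φ)) :=
    continuous_uncurry_flow (contDiff_uncurry_tangentField hu (by norm_num))
      (hasDerivAt_tangentField_flow hu₁ hφ hφ₁)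
      fun t => (contDiff_tangentField_slice (hφ₂ t) (m := 1) (by norm_num)).locallyLipschitz
  have hcont : Continuous (uncurry φ) :=
    continuous_uncurry_flow hu₁ hφ fun t => (hφ₁ t).locallyLipschitz
  have hF : Continuous fun p : ℝ × V => fderiv ℝ (φ p.1) p.2 :=
    continuous_clm_apply.2 fun w =>
      (htan.comp (continuous_fst.prodMk (continuous_snd.prodMk continuous_const))).snd
  have hvel : Continuous fun p : ℝ × V =>
      ContinuousLinearMap.toSpanSingleton ℝ (u p.1 (φ p.1 p.2)) := by
    refine continuous_clm_apply.2 fun c => ?_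
    simp only [ContinuousLinearMap.toSpanSingleton_apply]
    exact (hu.continuous.comp (continuous_fst.prodMk hcont)).const_smul c
  rw [contDiff_one_iff_hasFDerivAt]
  refine ⟨fun p => (ContinuousLinearMap.toSpanSingleton ℝ (u p.1 (φ p.1 p.2))).coprod
    (fderiv ℝ (φ p.1) p.2), ?_, fun p => ?_⟩
  · refine continuous_clm_apply.2 fun v => ?_
    exact (hvel.clm_apply continuous_const).add (hF.clm_apply continuous_const)
  · exact (hasStrictFDerivAt_uncurry_coprod
      (f₁ := fun t X => ContinuousLinearMap.toSpanSingleton ℝ (u t (φ t X)))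
      (f₂ := fun t X => fderiv ℝ (φ t) X)
      (Eventually.of_forall fun v => (hφ v.1 v.2).hasFDerivAt)
      (Eventually.of_forall fun v => ((hφ₁ v.1).differentiable one_ne_zero _).hasFDerivAt)
      hvel.continuousAt hF.continuousAt).hasFDerivAt

end FiniteDim

/-- The spatial inverses of a `C¹` family of bijections with invertible spatial derivatives
form a `C¹` family. -/
theorem contDiff_invFun_family [CompleteSpace V] {φ : ℝ → V → V}
    (hφ : ContDiff ℝ 1 (uncurry φ)) (hbij : ∀ t, Bijective (φ t)) (F : ℝ → V → V ≃L[ℝ] V)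
    (hF : ∀ t X, (F t X : V →L[ℝ] V) = fderiv ℝ (φ t) X) :
    ContDiff ℝ 1 (fun p : ℝ × V => invFun (φ p.1) p.2) := by
  let H : ℝ × V → ℝ × V := fun p => (p.1, φ p.1 p.2)
  have hHC : ContDiff ℝ 1 H := contDiff_fst.prodMk hφ
  have hHbij : Bijective H := by
    refine ⟨fun p q h => ?_, fun p => ?_⟩
    · obtain ⟨t, X⟩ := p
      obtain ⟨t', X'⟩ := q
      obtain ⟨rfl, h2⟩ := Prod.mk.inj h
      exact Prod.ext rfl ((hbij t).1 h2)
    · obtain ⟨X, hX⟩ := (hbij p.1).2 p.2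
      exact ⟨(p.1, X), Prod.ext rfl hX⟩
  let v : ℝ × V → ℝ →L[ℝ] V := fun p =>
    (fderiv ℝ (uncurry φ) p).comp (ContinuousLinearMap.inl ℝ ℝ V)
  let D : ℝ × V → (ℝ × V) ≃L[ℝ] (ℝ × V) := fun p =>
    ContinuousLinearEquiv.equivOfInverse
      ((ContinuousLinearMap.fst ℝ ℝ V).prod ((v p).coprod (F p.1 p.2 : V →L[ℝ] V)))
      ((ContinuousLinearMap.fst ℝ ℝ V).prod (((F p.1 p.2).symm : V →L[ℝ] V).comp
        (ContinuousLinearMap.snd ℝ ℝ V - (v p).comp (ContinuousLinearMap.fst ℝ ℝ V))))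
      (fun q => by simp) (fun q => by simp)
  have hD (p : ℝ × V) : HasStrictFDerivAt H (D p : ℝ × V →L[ℝ] ℝ × V) p := by
    have h := hasStrictFDerivAt_fst.prodMk (hφ.contDiffAt.hasStrictFDerivAt (x := p) one_ne_zero)
    refine h.congr_fderiv ?_
    have hsnd : (F p.1 p.2 : V →L[ℝ] V) =
        (fderiv ℝ (uncurry φ) p).comp (ContinuousLinearMap.inr ℝ ℝ V) := by
      rw [hF]
      have hd : HasFDerivAt (uncurry φ) (fderiv ℝ (uncurry φ) p) (p.1, p.2) :=
        (hφ.differentiable one_ne_zero p).hasFDerivAt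
      exact (HasFDerivAt.comp p.2 hd (hasFDerivAt_prodMk_right p.1 p.2)).fderiv
    refine ContinuousLinearMap.ext fun q => Prod.ext rfl ?_
    change fderiv ℝ (uncurry φ) p q = v p q.1 + (F p.1 p.2 : V →L[ℝ] V) q.2
    rw [hsnd]
    simp [v, ← map_add]
  let e : (ℝ × V) ≃ₜ (ℝ × V) := (Equiv.ofBijective H hHbij).toHomeomorphOfContinuousOpen
    hHC.continuous (isOpenMap_of_hasStrictFDerivAt_equiv hD)
  have hsymm : ContDiff ℝ 1 e.symm := e.contDiff_symm (fun p => (hD p).hasFDerivAt) hHC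
  convert hsymm.snd using 1
  ext1 p
  have h : e (p.1, invFun (φ p.1) p.2) = p :=
    Prod.ext rfl (rightInverse_invFun (hbij p.1).2 p.2)
  exact congrArg Prod.snd (e.eq_symm_apply.2 h)

/-- The pairing of a form field with a moving vector field varies along trajectories at the rate
given by the Lie derivative of the form field. -/
theorem hasDerivAt_pairing_of_moving {u φ : ℝ → V → V}
    (hφ : ∀ t X, HasDerivAt (fun τ => φ τ X) (u t (φ t X)) t)
    {C : ℝ → V → (V →L[ℝ] ℝ)} (hC : ContDiff ℝ 1 (uncurry C))
    {J : ℝ → V → V} (hJ : ContDiff ℝ 1 (uncurry J))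
    (hJ₀ : ∀ t x, deriv (fun τ => J τ x) t + fderiv ℝ (J t) x (u t x)
      - fderiv ℝ (u t) x (J t x) = 0) (t : ℝ) (X : V) :
    HasDerivAt (fun τ => C τ (φ τ X) (J τ (φ τ X)))
      ((deriv (fun τ => C τ (φ t X)) t + fderiv ℝ (C t) (φ t X) (u t (φ t X))
        + (C t (φ t X)).comp (fderiv ℝ (u t) (φ t X))) (J t (φ t X))) t := by
  have h := (hasDerivAt_along_curve hC (hφ t X)).clm_apply
    (hasDerivAt_along_curve hJ (hφ t X))
  rw [sub_eq_zero.1 (hJ₀ t (φ t X))] at h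
  exact h

/-- A constant vector at the initial time, transported by the differential of the flow, is a `C¹`
vector field moving with the fluid. -/
theorem exists_moving_field [FiniteDimensional ℝ V] {u φ : ℝ → V → V}
    (hu : ContDiff ℝ 3 (uncurry u))
    (hφ : ∀ t X, HasDerivAt (fun τ => φ τ X) (u t (φ t X)) t)
    (hφ₃ : ∀ t, ContDiff ℝ 3 (φ t)) (hbij : ∀ t, Bijective (φ t)) (F : ℝ → V → V ≃L[ℝ] V)
    (hF : ∀ t X, (F t X : V →L[ℝ] V) = fderiv ℝ (φ t) X) (w : V) :
    ∃ J : ℝ → V → V, ContDiff ℝ 1 (uncurry J) ∧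
      (∀ t x, deriv (fun τ => J τ x) t + fderiv ℝ (J t) x (u t x)
        - fderiv ℝ (u t) x (J t x) = 0) ∧
      ∀ t X, J t (φ t X) = F t X w := by
  have := FiniteDimensional.complete ℝ V
  have hu₁ : ContDiff ℝ 1 (uncurry u) := hu.of_le (by norm_num)
  have hφ₁ (t : ℝ) : ContDiff ℝ 1 (φ t) := (hφ₃ t).of_le (by norm_num)
  have hφC : ContDiff ℝ 1 (uncurry φ) :=
    contDiff_one_uncurry_flow (hu.of_le (by norm_num)) hφ fun t => (hφ₃ t).of_le (by norm_num)
  have htan : ContDiff ℝ 1 (uncurry (tangentField φ)) :=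
    contDiff_one_uncurry_flow (contDiff_uncurry_tangentField hu (by norm_num))
      (hasDerivAt_tangentField_flow hu₁ hφ hφ₁)
      fun t => contDiff_tangentField_slice (hφ₃ t) (by norm_num)
  have hJφ (t : ℝ) (X : V) : fderiv ℝ (φ t) (invFun (φ t) (φ t X)) w = fderiv ℝ (φ t) X w := by
    rw [leftInverse_invFun (hbij t).1 X]
  have hJ : ContDiff ℝ 1
      (uncurry fun t x => fderiv ℝ (φ t) (invFun (φ t) x) w) :=
    (htan.comp (contDiff_fst.prodMk
      ((contDiff_invFun_family hφC hbij F hF).prodMk contDiff_const))).snd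
  refine ⟨fun t x => fderiv ℝ (φ t) (invFun (φ t) x) w, hJ, fun t x => ?_, fun t X => ?_⟩
  · obtain ⟨X, rfl⟩ := (hbij t).2 x
    have h₁ := hasDerivAt_along_curve hJ (hφ t X)
    have h₂ := (hasDerivAt_tangentField_flow hu₁ hφ hφ₁ t (X, w)).snd
    simp only [hJφ] at h₁ ⊢
    exact sub_eq_zero.2 (h₁.unique h₂)
  · exact (hJφ t X).trans (congrArg (· w) (hF t X)).symm

end Flow


/-- A form field is moving with the fluid iff, paired with any
vector field moving with the fluid, it yields a scalar constant along trajectories. -/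
theorem form_field_moving_iff_pairing_constant
    (u φ : ℝ → E3 → E3)
    (F : ℝ → E3 → (E3 ≃L[ℝ] E3))
    (hu : ContDiff ℝ (⊤ : ℕ∞) (Function.uncurry u))
    (hφ0 : ∀ X, φ 0 X = X)
    (hφt : ∀ t X, HasDerivAt (fun τ => φ τ X) (u t (φ t X)) t)
    (hφsmooth : ∀ t, ContDiff ℝ (⊤ : ℕ∞) (φ t))
    (hφbij : ∀ t, Function.Bijective (φ t))
    (hφinv : ∀ t, ContDiff ℝ (⊤ : ℕ∞) (Function.invFun (φ t)))
    (hF : ∀ t X, (F t X : E3 →L[ℝ] E3) = fderiv ℝ (φ t) X)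
    (C : ℝ → E3 → (E3 →L[ℝ] ℝ))
    (hC : ContDiff ℝ 1 (Function.uncurry C)) :
    (∀ t x, deriv (fun τ => C τ x) t + fderiv ℝ (C t) x (u t x)
        + (C t x).comp (fderiv ℝ (u t) x) = 0) ↔
      (∀ J : ℝ → E3 → E3, ContDiff ℝ 1 (Function.uncurry J) →
        (∀ t x, deriv (fun τ => J τ x) t + fderiv ℝ (J t) x (u t x)
          - fderiv ℝ (u t) x (J t x) = 0) →
        ∀ (X : E3) (t₁ t₂ : ℝ),
          C t₁ (φ t₁ X) (J t₁ (φ t₁ X)) = C t₂ (φ t₂ X) (J t₂ (φ t₂ X))) := by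
  have htop (n : ℕ) : (n : WithTop ℕ∞) ≤ ((⊤ : ℕ∞) : WithTop ℕ∞) := by
    exact_mod_cast (le_top : (n : ℕ∞) ≤ ⊤)
  constructor
  · intro hC₀ J hJ hJ₀ X t₁ t₂
    refine is_const_of_deriv_eq_zero
      (fun t => (hasDerivAt_pairing_of_moving hφt hC hJ hJ₀ t X).differentiableAt)
      (fun t => ?_) t₁ t₂
    rw [(hasDerivAt_pairing_of_moving hφt hC hJ hJ₀ t X).deriv, hC₀]
    rfl
  · intro h t x
    ext1 v
    obtain ⟨X, rfl⟩ := (hφbij t).2 x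
    obtain ⟨J, hJ, hJ₀, hJF⟩ := exists_moving_field (hu.of_le (htop 3)) hφt
      (fun t => (hφsmooth t).of_le (htop 3)) hφbij F hF ((F t X).symm v)
    have hd := hasDerivAt_pairing_of_moving hφt hC hJ hJ₀ t X
    rw [hJF, (F t X).apply_symm_apply] at hd
    refine hd.unique ?_
    rw [funext fun τ => h J hJ hJ₀ X τ t]
    exact hasDerivAt_const t _
end
end

section
/- (Transport theorem for 3-forms.) Let v : ℝ × E → ℝ be C¹ and let Ω₀ ⊆ E be a compact measurable set. Then the function t ↦ ∫_{Ω₀} v(t, φ(t, X)) · det F(t, X) dX is differentiable and its derivative equals ∫_{Ω₀} [ ∂v/∂t + D_x v (u) + v · div u ]（t, φ(t, X)) · det F(t, X) dX; i.e. d/dt ∫_Ω π dω = ∫_Ω d_L π dω for the 3-form π = v·det on the convected domain Ω = φ(t, Ω₀). -/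
noncomputable section

open MeasureTheory

local notation "E3" => EuclideanSpace ℝ (Fin 3)

/-- divergence of a vector field: trace of its Fréchet derivative. -/
def divv (w : E3 → E3) (x : E3) : ℝ :=
  LinearMap.trace ℝ E3 (fderiv ℝ w x : E3 →ₗ[ℝ] E3)

section Flow

open Set Filter Topology

variable {E : Type*} [NormedAddCommGroup E] [NormedSpace ℝ E]

/-- Grönwall's inequality with a differential inequality required only while `‖f‖ ≤ r`. -/
lemma norm_le_mul_exp_of_norm_deriv_le {f f' : ℝ → E} {T L ε r : ℝ}
    (hf : ∀ t, HasDerivAt f (f' t) t)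
    (hL : 0 ≤ L) (hε : 0 < ε) (h0 : ‖f 0‖ ≤ ε) (hr : ε * Real.exp ((L + 1) * T) ≤ r)
    (hb : ∀ t ∈ Icc 0 T, ‖f t‖ ≤ r → ‖f' t‖ ≤ L * ‖f t‖) :
    ∀ t ∈ Icc 0 T, ‖f t‖ ≤ ε * Real.exp ((L + 1) * t) := by
  have hB : ∀ t : ℝ, HasDerivAt (fun t => ε * Real.exp ((L + 1) * t))
      (ε * (Real.exp ((L + 1) * t) * (L + 1))) t := fun t => by
    simpa using (((hasDerivAt_id t).const_mul (L + 1)).exp).const_mul ε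
  intro t ht
  refine image_norm_le_of_norm_deriv_right_lt_deriv_boundary' (a := 0) (b := T)
    (fun t _ => (hf t).continuousAt.continuousWithinAt)
    (fun t _ => (hf t).hasDerivWithinAt) (by simpa using h0)
    (fun t _ => (hB t).continuousAt.continuousWithinAt)
    (fun t _ => (hB t).hasDerivWithinAt) (fun s hs hfs => ?_) ht
  have hexp : ε * Real.exp ((L + 1) * s) ≤ ε * Real.exp ((L + 1) * T) := by
    have := hs.2.le
    gcongr
  have h1 := hb s ⟨hs.1, hs.2.le⟩ (hfs.le.trans (hexp.trans hr))
  have h2 : 0 < ε * Real.exp ((L + 1) * s) := by positivity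
  rw [hfs] at h1
  linarith

/-- A `C¹` time-dependent field is Lipschitz in space, uniformly on compact sets. -/
lemma exists_lipschitz_bound_on_closedBall [ProperSpace E] {u : ℝ → E → E}
    (hu : ContDiff ℝ 1 (Function.uncurry u)) (a b R : ℝ) :
    ∃ L : ℝ, 0 ≤ L ∧ ∀ t ∈ Icc a b, ∀ x ∈ Metric.closedBall (0 : E) R,
      ∀ y ∈ Metric.closedBall (0 : E) R, ‖u t x - u t y‖ ≤ L * ‖x - y‖ := by
  obtain ⟨L, hL⟩ := (hu.contDiffOn (s := Icc a b ×ˢ Metric.closedBall (0 : E) R)).exists_lipschitzOnWith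
    one_ne_zero ((convex_Icc a b).prod (convex_closedBall 0 R))
    (isCompact_Icc.prod (isCompact_closedBall 0 R))
  refine ⟨L, L.2, fun t ht x hx y hy => ?_⟩
  have := hL.dist_le_mul (t, x) ⟨ht, hx⟩ (t, y) ⟨ht, hy⟩
  simpa [Prod.dist_eq, dist_eq_norm, Function.uncurry] using this

lemma exists_flow_lipschitz_forward [ProperSpace E] {u φ : ℝ → E → E}
    (hu : ContDiff ℝ 1 (Function.uncurry u)) (hφ0 : ∀ X, φ 0 X = X)
    (hφt : ∀ t X, HasDerivAt (fun τ => φ τ X) (u t (φ t X)) t) (T : ℝ) (X₀ : E) :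
    ∃ δ > 0, ∃ C, 0 ≤ C ∧ ∀ t ∈ Icc 0 T, ∀ X ∈ Metric.ball X₀ δ, ‖φ t X‖ ≤ C ∧
      ∀ Y ∈ Metric.ball X₀ δ, ‖φ t X - φ t Y‖ ≤ C * ‖X - Y‖ := by
  have hcont : Continuous fun τ => φ τ X₀ :=
    continuous_iff_continuousAt.2 fun t => (hφt t X₀).continuousAt
  obtain ⟨R₀, hR₀⟩ := (isCompact_Icc (a := (0 : ℝ)) (b := T)).exists_bound_of_continuousOn
    hcont.continuousOn
  obtain ⟨L, hL0, hL⟩ := exists_lipschitz_bound_on_closedBall hu 0 T (R₀ + 1)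
  have hderiv : ∀ X Y t, HasDerivAt (fun τ => φ τ X - φ τ Y) (u t (φ t X) - u t (φ t Y)) t :=
    fun X Y t => (hφt t X).sub (hφt t Y)
  have htube : ∀ t ∈ Icc 0 T, ∀ x, ‖x - φ t X₀‖ ≤ 1 → x ∈ Metric.closedBall (0 : E) (R₀ + 1) := by
    intro t ht x hx
    rw [mem_closedBall_zero_iff]
    linarith [norm_sub_norm_le x (φ t X₀), hR₀ t ht]
  have hstay : ∀ X ∈ Metric.ball X₀ (Real.exp (-((L + 1) * T))), ∀ t ∈ Icc 0 T,
      ‖φ t X - φ t X₀‖ ≤ 1 := by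
    intro X hX t ht
    have h1 : Real.exp (-((L + 1) * T)) * Real.exp ((L + 1) * T) = 1 := by
      rw [← Real.exp_add]; simp
    refine (norm_le_mul_exp_of_norm_deriv_le (hderiv X X₀) hL0 (Real.exp_pos _) ?_ h1.le
      (fun s hs hs1 => hL s hs _ (htube s hs _ hs1) _ (htube s hs _ (by simp))) t ht).trans
      (le_trans ?_ h1.le)
    · simpa [hφ0, ← dist_eq_norm] using (Metric.mem_ball.1 hX).le
    · have := ht.2
      gcongr
  refine ⟨_, Real.exp_pos (-((L + 1) * T)), max (|R₀| + 1) (Real.exp ((L + 1) * T)),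
    by positivity, fun t ht X hX => ⟨?_, fun Y hY => ?_⟩⟩
  · have := mem_closedBall_zero_iff.1 (htube t ht _ (hstay X hX t ht))
    exact this.trans ((add_le_add_left (le_abs_self R₀) 1).trans (le_max_left _ _))
  · rcases eq_or_ne X Y with rfl | hXY
    · simp
    have hpos : 0 < ‖X - Y‖ := norm_pos_iff.2 (sub_ne_zero.2 hXY)
    have := norm_le_mul_exp_of_norm_deriv_le (hderiv X Y) hL0 hpos (by simp [hφ0]) le_rfl
      (fun s hs _ => hL s hs _ (htube s hs _ (hstay X hX s hs)) _
        (htube s hs _ (hstay Y hY s hs))) t ht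
    refine this.trans ?_
    rw [mul_comm]
    gcongr
    refine le_max_of_le_right ?_
    have := ht.2
    gcongr

/-- Trajectories of a `C¹` field depend locally Lipschitz continuously on the initial position. -/
lemma exists_flow_lipschitz [ProperSpace E] {u φ : ℝ → E → E}
    (hu : ContDiff ℝ 1 (Function.uncurry u)) (hφ0 : ∀ X, φ 0 X = X)
    (hφt : ∀ t X, HasDerivAt (fun τ => φ τ X) (u t (φ t X)) t) (T : ℝ) (X₀ : E) :
    ∃ δ > 0, ∃ C, 0 ≤ C ∧ ∀ t ∈ Icc (-T) T, ∀ X ∈ Metric.ball X₀ δ, ‖φ t X‖ ≤ C ∧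
      ∀ Y ∈ Metric.ball X₀ δ, ‖φ t X - φ t Y‖ ≤ C * ‖X - Y‖ := by
  obtain ⟨δ₁, hδ₁, C₁, hC₁, h₁⟩ := exists_flow_lipschitz_forward hu hφ0 hφt T X₀
  have hu' : ContDiff ℝ 1 (Function.uncurry fun t x => -u (-t) x) :=
    (hu.comp (contDiff_fst.neg.prodMk contDiff_snd)).neg
  have hφt' : ∀ t X, HasDerivAt (fun τ => φ (-τ) X) (-u (-t) (φ (-t) X)) t := fun t X => by
    simpa [Function.comp_def] using (hφt (-t) X).scomp t (hasDerivAt_neg t)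
  obtain ⟨δ₂, hδ₂, C₂, hC₂, h₂⟩ := exists_flow_lipschitz_forward (φ := fun t => φ (-t)) hu'
    (by simpa using hφ0) hφt' T X₀
  have hb₁ := Metric.ball_subset_ball (x := X₀) (min_le_left δ₁ δ₂)
  have hb₂ := Metric.ball_subset_ball (x := X₀) (min_le_right δ₁ δ₂)
  refine ⟨min δ₁ δ₂, lt_min hδ₁ hδ₂, max C₁ C₂, le_max_of_le_left hC₁, fun t ht X hX => ?_⟩
  rcases le_total 0 t with h | h
  · obtain ⟨ha, hb⟩ := h₁ t ⟨h, ht.2⟩ X (hb₁ hX)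
    refine ⟨le_max_of_le_left ha, fun Y hY => (hb Y (hb₁ hY)).trans ?_⟩
    gcongr
    exact le_max_left _ _
  · obtain ⟨ha, hb⟩ := h₂ (-t) ⟨by linarith, by linarith [ht.1]⟩ X (hb₂ hX)
    simp only [neg_neg] at ha hb
    refine ⟨le_max_of_le_right ha, fun Y hY => (hb Y (hb₂ hY)).trans ?_⟩
    gcongr
    exact le_max_right _ _

lemma fderiv_eq_fderiv_uncurry_comp_inr {G : Type*} [NormedAddCommGroup G] [NormedSpace ℝ G]
    {w : ℝ → E → G} (hw : ContDiff ℝ 1 (Function.uncurry w)) (t : ℝ) (x : E) :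
    fderiv ℝ (w t) x
      = (fderiv ℝ (Function.uncurry w) (t, x)).comp (ContinuousLinearMap.inr ℝ ℝ E) :=
  ((hw.differentiable one_ne_zero (t, x)).hasFDerivAt.comp x
    (hasFDerivAt_prodMk_right t x)).fderiv

lemma continuous_uncurry_fderiv {G : Type*} [NormedAddCommGroup G] [NormedSpace ℝ G]
    {w : ℝ → E → G} (hw : ContDiff ℝ 1 (Function.uncurry w)) :
    Continuous fun p : ℝ × E => fderiv ℝ (w p.1) p.2 := by
  simp_rw [fderiv_eq_fderiv_uncurry_comp_inr hw]
  exact (hw.continuous_fderiv one_ne_zero).clm_comp continuous_const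

/-- The equation of variations in integrated form, on a compact time interval. -/
lemma fderiv_flow_apply_eq_add_integral [ProperSpace E] [CompleteSpace E] {u φ : ℝ → E → E}
    (hu : ContDiff ℝ 1 (Function.uncurry u)) (hφ0 : ∀ X, φ 0 X = X)
    (hφt : ∀ t X, HasDerivAt (fun τ => φ τ X) (u t (φ t X)) t)
    (hφd : ∀ t, Differentiable ℝ (φ t)) (X e : E) {T : ℝ} (hT : 0 ≤ T) :
    ContinuousOn (fun s => fderiv ℝ (φ s) X e) (Icc (-T) T) ∧ ∀ s ∈ Icc (-T) T,
      fderiv ℝ (φ s) X e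
        = e + ∫ τ in (0 : ℝ)..s, fderiv ℝ (u τ) (φ τ X) (fderiv ℝ (φ τ) X e) := by
  obtain ⟨δ, hδ, C, hC, hb⟩ := exists_flow_lipschitz hu hφ0 hφt T X
  obtain ⟨L, hL0, hL⟩ := exists_lipschitz_bound_on_closedBall hu (-T) T C
  have hX : X ∈ Metric.ball X δ := Metric.mem_ball_self hδ
  have hφc : ∀ Y, Continuous fun τ => φ τ Y := fun Y =>
    continuous_iff_continuousAt.2 fun t => (hφt t Y).continuousAt
  have huc : ∀ Y, Continuous fun τ => u τ (φ τ Y) := fun Y =>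
    hu.continuous.comp (continuous_id.prodMk (hφc Y))
  set q : ℝ → ℝ → E := fun h s => h⁻¹ • (φ s (X + h • e) - φ s X) with hq
  set q' : ℝ → ℝ → E := fun h s => h⁻¹ • (u s (φ s (X + h • e)) - u s (φ s X)) with hq'
  have hq'c : ∀ h, Continuous (q' h) := fun h => ((huc _).sub (huc _)).const_smul _
  have hqd : ∀ h s, HasDerivAt (q h) (q' h s) s := fun h s =>
    ((hφt s _).sub (hφt s _)).const_smul _
  have hqlim : ∀ s, Tendsto (fun h => q h s) (𝓝[≠] 0) (𝓝 (fderiv ℝ (φ s) X e)) := fun s =>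
    ((hφd s X).hasFDerivAt.hasLineDerivAt e).tendsto_slope_zero
  have hud : ∀ s x, DifferentiableAt ℝ (u s) x := fun s x =>
    ((hu.comp (contDiff_prodMk_right s)).differentiable one_ne_zero) x
  have hq'lim : ∀ s, Tendsto (fun h => q' h s) (𝓝[≠] 0)
      (𝓝 (fderiv ℝ (u s) (φ s X) (fderiv ℝ (φ s) X e))) := fun s =>
    (((hud s (φ s X)).hasFDerivAt.comp X (hφd s X).hasFDerivAt).hasLineDerivAt e).tendsto_slope_zero
  have hnear : ∀ᶠ h : ℝ in 𝓝[≠] 0, X + h • e ∈ Metric.ball X δ := by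
    have : Tendsto (fun h : ℝ => X + h • e) (𝓝 0) (𝓝 X) := by
      have : Continuous fun h : ℝ => X + h • e := by fun_prop
      simpa using this.tendsto 0
    exact (this.mono_left nhdsWithin_le_nhds).eventually (Metric.ball_mem_nhds X hδ)
  have hbound : ∀ᶠ h : ℝ in 𝓝[≠] 0, ∀ s ∈ Icc (-T) T, ‖q' h s‖ ≤ L * (C * ‖e‖) := by
    filter_upwards [hnear, self_mem_nhdsWithin] with h hh hne s hs
    have hne : h ≠ 0 := hne
    have h1 := hL s hs _ (mem_closedBall_zero_iff.2 (hb s hs _ hh).1) _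
      (mem_closedBall_zero_iff.2 (hb s hs _ hX).1)
    have h2 := (hb s hs _ hh).2 X hX
    rw [add_sub_cancel_left, norm_smul] at h2
    calc ‖q' h s‖ = ‖h‖⁻¹ * ‖u s (φ s (X + h • e)) - u s (φ s X)‖ := by
          rw [hq', norm_smul, norm_inv]
      _ ≤ ‖h‖⁻¹ * (L * (C * (‖h‖ * ‖e‖))) := by gcongr; exact h1.trans (by gcongr)
      _ = L * (C * ‖e‖) := by field_simp
  refine ⟨?_, fun s hs => ?_⟩
  · have hlip : ∀ s ∈ Icc (-T) T, ∀ s' ∈ Icc (-T) T,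
        dist (fderiv ℝ (φ s) X e) (fderiv ℝ (φ s') X e) ≤ L * (C * ‖e‖) * dist s s' := by
      intro s hs s' hs'
      rw [dist_eq_norm, dist_eq_norm]
      refine le_of_tendsto ((hqlim s).sub (hqlim s')).norm ?_
      filter_upwards [hbound] with h hh
      exact (convex_Icc (-T) T).norm_image_sub_le_of_norm_hasDerivWithin_le
        (fun x _ => (hqd h x).hasDerivWithinAt) hh hs' hs
    exact (LipschitzOnWith.of_dist_le_mul (K := ⟨L * (C * ‖e‖), by positivity⟩) hlip).continuousOn
  · have hsub : uIoc 0 s ⊆ Icc (-T) T := by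
      refine uIoc_subset_uIcc.trans (uIcc_subset_Icc ⟨by linarith, hT⟩ hs)
    have hint : Tendsto (fun h => ∫ τ in (0 : ℝ)..s, q' h τ) (𝓝[≠] 0)
        (𝓝 (∫ τ in (0 : ℝ)..s, fderiv ℝ (u τ) (φ τ X) (fderiv ℝ (φ τ) X e))) := by
      refine intervalIntegral.tendsto_integral_filter_of_dominated_convergence
        (fun _ => L * (C * ‖e‖)) (Eventually.of_forall fun h => (hq'c h).aestronglyMeasurable)
        ?_ intervalIntegrable_const (Eventually.of_forall fun τ _ => hq'lim τ)
      filter_upwards [hbound] with h hh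
      exact Eventually.of_forall fun τ hτ => hh τ (hsub hτ)
    refine tendsto_nhds_unique (hqlim s) ((hint.const_add e).congr' ?_)
    filter_upwards [self_mem_nhdsWithin] with h hne
    have hne : h ≠ 0 := hne
    rw [intervalIntegral.integral_eq_sub_of_hasDerivAt (fun x _ => hqd h x)
      ((hq'c h).intervalIntegrable _ _)]
    simp [hq, hφ0, smul_smul, hne]

/-- The equation of variations: `∂ₜ (Dφ) = Du ∘ Dφ`. -/
lemma hasDerivAt_fderiv_flow_apply [ProperSpace E] [CompleteSpace E] {u φ : ℝ → E → E}
    (hu : ContDiff ℝ 1 (Function.uncurry u)) (hφ0 : ∀ X, φ 0 X = X)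
    (hφt : ∀ t X, HasDerivAt (fun τ => φ τ X) (u t (φ t X)) t)
    (hφd : ∀ t, Differentiable ℝ (φ t)) (t : ℝ) (X e : E) :
    HasDerivAt (fun s => fderiv ℝ (φ s) X e)
      (fderiv ℝ (u t) (φ t X) (fderiv ℝ (φ t) X e)) t := by
  have hW : Continuous fun s => fderiv ℝ (φ s) X e := by
    refine continuous_iff_continuousAt.2 fun s => ?_
    refine (fderiv_flow_apply_eq_add_integral hu hφ0 hφt hφd X e
      (T := |s| + 1) (by positivity)).1.continuousAt (Icc_mem_nhds ?_ ?_)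
    · linarith [neg_abs_le s]
    · linarith [le_abs_self s]
  have hφc : Continuous fun τ => φ τ X :=
    continuous_iff_continuousAt.2 fun t => (hφt t X).continuousAt
  have hg : Continuous fun τ => fderiv ℝ (u τ) (φ τ X) (fderiv ℝ (φ τ) X e) :=
    ((continuous_uncurry_fderiv hu).comp (continuous_id.prodMk hφc)).clm_apply hW
  have heq : (fun s => fderiv ℝ (φ s) X e)
      = fun s => e + ∫ τ in (0 : ℝ)..s, fderiv ℝ (u τ) (φ τ X) (fderiv ℝ (φ τ) X e) := by
    funext s
    exact (fderiv_flow_apply_eq_add_integral hu hφ0 hφt hφd X e (abs_nonneg s)).2 s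
      ⟨neg_abs_le s, le_abs_self s⟩
  rw [heq]
  exact (intervalIntegral.integral_hasDerivAt_right (hg.intervalIntegrable _ _)
    (hg.stronglyMeasurableAtFilter _ _) hg.continuousAt).const_add e

/-- The flow and its spatial derivative are bounded on compact sets. -/
lemma exists_bound_flow_fderiv [ProperSpace E] {u φ : ℝ → E → E}
    (hu : ContDiff ℝ 1 (Function.uncurry u)) (hφ0 : ∀ X, φ 0 X = X)
    (hφt : ∀ t X, HasDerivAt (fun τ => φ τ X) (u t (φ t X)) t)
    {K : Set E} (hK : IsCompact K) (T : ℝ) :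
    ∃ C, ∀ t ∈ Icc (-T) T, ∀ X ∈ K, ‖φ t X‖ ≤ C ∧ ‖fderiv ℝ (φ t) X‖ ≤ C := by
  refine hK.induction_on (p := fun K => ∃ C, ∀ t ∈ Icc (-T) T, ∀ X ∈ K,
    ‖φ t X‖ ≤ C ∧ ‖fderiv ℝ (φ t) X‖ ≤ C) (by simp) ?_ ?_ ?_
  · rintro s t hst ⟨C, hC⟩
    exact ⟨C, fun τ hτ X hX => hC τ hτ X (hst hX)⟩
  · rintro s t ⟨C₁, h₁⟩ ⟨C₂, h₂⟩
    refine ⟨max C₁ C₂, fun τ hτ X hX => ?_⟩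
    rcases hX with hX | hX
    · exact ⟨le_max_of_le_left (h₁ τ hτ X hX).1, le_max_of_le_left (h₁ τ hτ X hX).2⟩
    · exact ⟨le_max_of_le_right (h₂ τ hτ X hX).1, le_max_of_le_right (h₂ τ hτ X hX).2⟩
  · intro X₀ _
    obtain ⟨δ, hδ, C, hC, hb⟩ := exists_flow_lipschitz hu hφ0 hφt T X₀
    refine ⟨Metric.ball X₀ δ, mem_nhdsWithin_of_mem_nhds (Metric.ball_mem_nhds X₀ hδ), C,
      fun t ht X hX => ⟨(hb t ht X hX).1, norm_fderiv_le_of_lip' ℝ hC ?_⟩⟩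
    filter_upwards [Metric.isOpen_ball.mem_nhds hX] with Y hY
    exact (hb t ht Y hY).2 X hX

end Flow

/-- Jacobi's formula for a curve of linear maps solving `A' = B ∘ A`. -/
lemma hasDerivAt_det_of_hasDerivAt_apply {A : ℝ → E3 →L[ℝ] E3} {B : E3 →L[ℝ] E3} {t : ℝ}
    (h : ∀ e, HasDerivAt (fun s => A s e) (B (A t e)) t) :
    HasDerivAt (fun s => LinearMap.det (A s : E3 →ₗ[ℝ] E3))
      (LinearMap.trace ℝ E3 (B : E3 →ₗ[ℝ] E3) * LinearMap.det (A t : E3 →ₗ[ℝ] E3)) t := by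
  set b := (EuclideanSpace.basisFun (Fin 3) ℝ).toBasis with hb
  have hdet : ∀ s, LinearMap.det (A s : E3 →ₗ[ℝ] E3)
      = (LinearMap.toMatrix b b (A s : E3 →ₗ[ℝ] E3)).det := fun s =>
    (LinearMap.det_toMatrix b _).symm
  have hentry : ∀ i j, HasDerivAt (fun s => LinearMap.toMatrix b b (A s : E3 →ₗ[ℝ] E3) i j)
      ((LinearMap.toMatrix b b (B : E3 →ₗ[ℝ] E3)
        * LinearMap.toMatrix b b (A t : E3 →ₗ[ℝ] E3)) i j) t := by
    intro i j
    rw [← LinearMap.toMatrix_comp]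
    have := (EuclideanSpace.proj (𝕜 := ℝ) i).hasFDerivAt.comp_hasDerivAt t (h (b j))
    simpa [LinearMap.toMatrix_apply, hb, Function.comp_def] using this
  simp_rw [hdet, LinearMap.trace_eq_matrix_trace ℝ b, Matrix.det_fin_three, Matrix.trace_fin_three]
  simp only [Matrix.mul_apply, Fin.sum_univ_three] at hentry
  convert! (((((((hentry 0 0).mul (hentry 1 1)).mul (hentry 2 2)).sub
    (((hentry 0 0).mul (hentry 1 2)).mul (hentry 2 1))).sub
    (((hentry 0 1).mul (hentry 1 0)).mul (hentry 2 2))).add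
    (((hentry 0 1).mul (hentry 1 2)).mul (hentry 2 0))).add
    (((hentry 0 2).mul (hentry 1 0)).mul (hentry 2 1))).sub
    (((hentry 0 2).mul (hentry 1 1)).mul (hentry 2 0)) using 1
  simp only [Pi.mul_apply]
  ring

/-- Transport theorem for 3-forms:
`d/dt ∫_Ω π dω = ∫_Ω d_L π dω` for `π = v·det` on a convected domain. -/
theorem transport_theorem_three_form
    (u φ : ℝ → E3 → E3)
    (F : ℝ → E3 → (E3 ≃L[ℝ] E3))
    (hu : ContDiff ℝ (⊤ : ℕ∞) (Function.uncurry u))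
    (hφ0 : ∀ X, φ 0 X = X)
    (hφt : ∀ t X, HasDerivAt (fun τ => φ τ X) (u t (φ t X)) t)
    (hφsmooth : ∀ t, ContDiff ℝ (⊤ : ℕ∞) (φ t))
    (hφbij : ∀ t, Function.Bijective (φ t))
    (hφinv : ∀ t, ContDiff ℝ (⊤ : ℕ∞) (Function.invFun (φ t)))
    (hF : ∀ t X, (F t X : E3 →L[ℝ] E3) = fderiv ℝ (φ t) X)
    (v : ℝ → E3 → ℝ)
    (hv : ContDiff ℝ 1 (Function.uncurry v))
    (Ω₀ : Set E3)
    (hΩ₀c : IsCompact Ω₀)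
    (hΩ₀m : MeasurableSet Ω₀) :
    ∀ t : ℝ,
      HasDerivAt
        (fun τ => ∫ X in Ω₀,
          v τ (φ τ X) * LinearMap.det ((F τ X : E3 →L[ℝ] E3) : E3 →ₗ[ℝ] E3))
        (∫ X in Ω₀,
          (deriv (fun τ => v τ (φ t X)) t
            + fderiv ℝ (v t) (φ t X) (u t (φ t X))
            + v t (φ t X) * divv (u t) (φ t X))
          * LinearMap.det ((F t X : E3 →L[ℝ] E3) : E3 →ₗ[ℝ] E3)) t := by
  intro t
  have hu1 : ContDiff ℝ 1 (Function.uncurry u) := hu.of_le (by exact_mod_cast le_top)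
  have hφd : ∀ s, Differentiable ℝ (φ s) := fun s => (hφsmooth s).differentiable (by simp)
  have hφC : ∀ s, Continuous (φ s) := fun s => (hφsmooth s).continuous
  have hFC : ∀ s, Continuous (fderiv ℝ (φ s)) := fun s =>
    (hφsmooth s).continuous_fderiv (by simp)
  have hdetC : Continuous fun A : E3 →L[ℝ] E3 => LinearMap.det (A : E3 →ₗ[ℝ] E3) :=
    ContinuousLinearMap.continuous_det
  have htraceC : Continuous fun A : E3 →L[ℝ] E3 => LinearMap.trace ℝ E3 (A : E3 →ₗ[ℝ] E3) :=
    (LinearMap.trace ℝ E3 ∘ₗ ContinuousLinearMap.coeLM ℝ).continuous_of_finiteDimensional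
  have hvd : ∀ p, HasFDerivAt (Function.uncurry v) (fderiv ℝ (Function.uncurry v) p) p :=
    fun p => (hv.differentiable one_ne_zero p).hasFDerivAt
  have hdt : ∀ s x, deriv (fun τ => v τ x) s = fderiv ℝ (Function.uncurry v) (s, x) (1, 0) :=
    fun s x => (HasFDerivAt.comp_hasDerivAt (f := fun τ => (τ, x)) s (hvd (s, x))
      ((hasDerivAt_id s).prodMk (hasDerivAt_const s x))).deriv
  simp_rw [hF]
  set G : ℝ × E3 × (E3 →L[ℝ] E3) → ℝ := fun p =>
    (deriv (fun τ => v τ p.2.1) p.1 + fderiv ℝ (v p.1) p.2.1 (u p.1 p.2.1)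
      + v p.1 p.2.1 * divv (u p.1) p.2.1) * LinearMap.det (p.2.2 : E3 →ₗ[ℝ] E3) with hG
  have hGC : Continuous G := by
    have hp : Continuous fun p : ℝ × E3 × (E3 →L[ℝ] E3) => (p.1, p.2.1) := by fun_prop
    have h1 : Continuous fun p : ℝ × E3 × (E3 →L[ℝ] E3) => deriv (fun τ => v τ p.2.1) p.1 := by
      simp_rw [hdt]
      exact ((hv.continuous_fderiv one_ne_zero).comp hp).clm_apply continuous_const
    have h2 := ((continuous_uncurry_fderiv hv).comp hp).clm_apply (hu.continuous.comp hp)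
    have h3 := (hv.continuous.comp hp).mul
      (htraceC.comp ((continuous_uncurry_fderiv hu1).comp hp))
    exact ((h1.add h2).add h3).mul (hdetC.comp continuous_snd.snd)
  have hderiv : ∀ s X, HasDerivAt
      (fun τ => v τ (φ τ X) * LinearMap.det (fderiv ℝ (φ τ) X : E3 →ₗ[ℝ] E3))
      (G (s, φ s X, fderiv ℝ (φ s) X)) s := by
    intro s X
    have h1 : HasDerivAt (fun τ => v τ (φ τ X))
        (fderiv ℝ (Function.uncurry v) (s, φ s X) (1, u s (φ s X))) s :=
      HasFDerivAt.comp_hasDerivAt (f := fun τ => (τ, φ τ X)) s (hvd (s, φ s X))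
        ((hasDerivAt_id s).prodMk (hφt s X))
    have h2 := hasDerivAt_det_of_hasDerivAt_apply
      fun e => hasDerivAt_fderiv_flow_apply hu1 hφ0 hφt hφd s X e
    convert! h1.mul h2 using 1
    have hsplit : fderiv ℝ (Function.uncurry v) (s, φ s X) (1, u s (φ s X))
        = deriv (fun τ => v τ (φ s X)) s + fderiv ℝ (v s) (φ s X) (u s (φ s X)) := by
      rw [hdt, fderiv_eq_fderiv_uncurry_comp_inr hv, ContinuousLinearMap.comp_apply,
        ContinuousLinearMap.inr_apply, ← map_add]
      simp
    rw [hsplit, hG]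
    simp only [divv]
    ring
  obtain ⟨C, hC⟩ := exists_bound_flow_fderiv hu1 hφ0 hφt hΩ₀c (|t| + 1)
  obtain ⟨M, hM⟩ := ((isCompact_Icc (a := -(|t| + 1)) (b := |t| + 1)).prod
    ((isCompact_closedBall (0 : E3) C).prod
      (isCompact_closedBall (0 : E3 →L[ℝ] E3) C))).exists_bound_of_continuousOn hGC.continuousOn
  have hcont : ∀ s, Continuous fun X =>
      v s (φ s X) * LinearMap.det (fderiv ℝ (φ s) X : E3 →ₗ[ℝ] E3) := fun s =>
    (hv.continuous.comp (continuous_const.prodMk (hφC s))).mul (hdetC.comp (hFC s))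
  refine (hasDerivAt_integral_of_dominated_loc_of_deriv_le
    (F' := fun s X => G (s, φ s X, fderiv ℝ (φ s) X)) (bound := fun _ => M)
    (s := Set.Icc (-(|t| + 1)) (|t| + 1)) (Icc_mem_nhds ?_ ?_)
    (Filter.Eventually.of_forall fun s => (hcont s).aestronglyMeasurable)
    ((hcont t).continuousOn.integrableOn_compact hΩ₀c)
    (hGC.comp (continuous_const.prodMk ((hφC t).prodMk (hFC t)))).aestronglyMeasurable
    ?_ ?_ (Filter.Eventually.of_forall fun X s _ => hderiv s X)).2
  · linarith [neg_abs_le t]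
  · linarith [le_abs_self t]
  · filter_upwards [ae_restrict_mem hΩ₀m] with X hX s hs
    exact hM _ ⟨hs, mem_closedBall_zero_iff.2 (hC s hs X hX).1,
      mem_closedBall_zero_iff.2 (hC s hs X hX).2⟩
  · exact integrableOn_const hΩ₀c.measure_lt_top.ne
end
end

section
/- Let c : ℝ × E → E be a C² vector field such that the associated form field C(t, x) := ⟪c(t, x), ·⟫ is moving with the fluid, i.e. ∂C/∂t + D_x C (u) + C ∘ D_x u = 0, and let ρ : ℝ × E → ℝ be a C¹ positive function satisfying the continuity equation ∂ρ/∂t + D_x ρ (u) + ρ · div u = 0. Then the vector field J(t, x) := (1/ρ(t, x)) · curl c(t, x) is moving with the fluid, i.e. ∂J/∂t(t, x) + D_x J(t, x)(u(t, x)) − D_x u(t, x)(J(t, x)) = 0 for all (t, x). -/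
noncomputable section

local notation "E3" => EuclideanSpace ℝ (Fin 3)

/-- the curl of a vector field on `EuclideanSpace ℝ (Fin 3)`, componentwise in
the standard orthonormal basis. -/
def curlE (w : E3 → E3) (x : E3) : E3 :=
  (WithLp.equiv 2 (Fin 3 → ℝ)).symm
    ![fderiv ℝ w x (EuclideanSpace.single 1 1) 2 - fderiv ℝ w x (EuclideanSpace.single 2 1) 1,
      fderiv ℝ w x (EuclideanSpace.single 2 1) 0 - fderiv ℝ w x (EuclideanSpace.single 0 1) 2,
      fderiv ℝ w x (EuclideanSpace.single 0 1) 1 - fderiv ℝ w x (EuclideanSpace.single 1 1) 0]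

/-- The curl as a linear function of the Fréchet derivative. -/
def curlLin : (E3 →L[ℝ] E3) →L[ℝ] E3 :=
  LinearMap.toContinuousLinearMap
    { toFun := fun A => WithLp.toLp 2
        ![A (EuclideanSpace.single 1 1) 2 - A (EuclideanSpace.single 2 1) 1,
          A (EuclideanSpace.single 2 1) 0 - A (EuclideanSpace.single 0 1) 2,
          A (EuclideanSpace.single 0 1) 1 - A (EuclideanSpace.single 1 1) 0]
      map_add' := by
        intro A B
        ext i
        fin_cases i <;> simp <;> ring
      map_smul' := by
        intro r A
        ext i
        fin_cases i <;> simp <;> ring }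

theorem curlE_eq_curlLin (w : E3 → E3) (x : E3) : curlE w x = curlLin (fderiv ℝ w x) := rfl

theorem curlLin_apply (A : E3 →L[ℝ] E3) : curlLin A = WithLp.toLp 2
    ![A (EuclideanSpace.single 1 1) 2 - A (EuclideanSpace.single 2 1) 1,
      A (EuclideanSpace.single 2 1) 0 - A (EuclideanSpace.single 0 1) 2,
      A (EuclideanSpace.single 0 1) 1 - A (EuclideanSpace.single 1 1) 0] := rfl

theorem clm_apply_eq_sum (A : E3 →L[ℝ] E3) (v : E3) (i : Fin 3) :
    A v i = v 0 * A (EuclideanSpace.single 0 1) i + v 1 * A (EuclideanSpace.single 1 1) i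
      + v 2 * A (EuclideanSpace.single 2 1) i := by
  have h : v = v 0 • EuclideanSpace.single 0 (1 : ℝ) + v 1 • EuclideanSpace.single 1 (1 : ℝ)
      + v 2 • EuclideanSpace.single 2 (1 : ℝ) := by
    ext j
    fin_cases j <;> simp
  conv_lhs => rw [h]
  simp

theorem trace_eq_sum (A : E3 →L[ℝ] E3) :
    LinearMap.trace ℝ E3 (A : E3 →ₗ[ℝ] E3) = A (EuclideanSpace.single 0 1) 0
      + A (EuclideanSpace.single 1 1) 1 + A (EuclideanSpace.single 2 1) 2 := by
  rw [LinearMap.trace_eq_sum_inner _ (EuclideanSpace.basisFun (Fin 3) ℝ), Fin.sum_univ_three]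
  simp [EuclideanSpace.inner_single_left]

/-- The action of `L` on two-forms, read through the identification of two-forms with vectors. -/
theorem curlLin_add_trace_smul {S M L : E3 →L[ℝ] E3}
    (h : ∀ w v : E3, inner ℝ (S w) v + inner ℝ (M (L w)) v + inner ℝ (M w) (L v)
      = inner ℝ (S v) w + inner ℝ (M (L v)) w + inner ℝ (M v) (L w)) :
    curlLin S + LinearMap.trace ℝ E3 (L : E3 →ₗ[ℝ] E3) • curlLin M = L (curlLin M) := by
  have h01 := h (EuclideanSpace.single 0 1) (EuclideanSpace.single 1 1)
  have h12 := h (EuclideanSpace.single 1 1) (EuclideanSpace.single 2 1)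
  have h20 := h (EuclideanSpace.single 2 1) (EuclideanSpace.single 0 1)
  simp only [PiLp.inner_apply, Fin.sum_univ_three,
    clm_apply_eq_sum M (L _), RCLike.inner_apply, conj_trivial] at h01 h12 h20
  simp at h01 h12 h20
  rw [trace_eq_sum]
  ext i
  rw [clm_apply_eq_sum L (curlLin M)]
  fin_cases i <;> simp [curlLin_apply] <;> linarith

theorem hasFDerivAt_slice {F : Type*} [NormedAddCommGroup F] [NormedSpace ℝ F]
    {f : ℝ → E3 → F} {t : ℝ} {x : E3}
    (hf : DifferentiableAt ℝ (Function.uncurry f) (t, x)) :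
    HasFDerivAt (f t)
      ((fderiv ℝ (Function.uncurry f) (t, x)).comp (ContinuousLinearMap.inr ℝ ℝ E3)) x :=
  hf.hasFDerivAt.comp x (hasFDerivAt_prodMk_right t x)

/-- The material derivative is the space-time derivative in the direction `(1, v)`. -/
theorem deriv_add_fderiv_eq {F : Type*} [NormedAddCommGroup F] [NormedSpace ℝ F]
    {f : ℝ → E3 → F} {t : ℝ} {x : E3}
    (hf : DifferentiableAt ℝ (Function.uncurry f) (t, x)) (v : E3) :
    deriv (fun τ => f τ x) t + fderiv ℝ (fun y => f t y) x v
      = fderiv ℝ (Function.uncurry f) (t, x) (1, v) := by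
  have h1 : HasFDerivAt (fun τ => f τ x)
      ((fderiv ℝ (Function.uncurry f) (t, x)).comp (ContinuousLinearMap.inl ℝ ℝ E3)) t :=
    HasFDerivAt.comp (f := fun τ => (τ, x)) t hf.hasFDerivAt (hasFDerivAt_prodMk_left t x)
  have h2 : HasFDerivAt (fun y => f t y) _ x := hasFDerivAt_slice hf
  rw [h1.hasDerivAt.deriv, h2.fderiv]
  simp [← map_add]

/-- The spatial derivative of the transport equation for a one-form `⟪c, ·⟫`. -/
theorem inner_fderiv_transport {c u : ℝ × E3 → E3} (hc : ContDiff ℝ 2 c) (hu : ContDiff ℝ 2 u)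
    {v : E3}
    (h : ∀ p, inner ℝ (fderiv ℝ c p (1, u p)) v + inner ℝ (c p) (fderiv ℝ u p (0, v)) = 0)
    (p : ℝ × E3) (w : E3) :
    inner ℝ (fderiv ℝ (fderiv ℝ c) p (1, u p) (0, w)) v
      + inner ℝ (fderiv ℝ c p (0, fderiv ℝ u p (0, w))) v
      + inner ℝ (fderiv ℝ c p (0, w)) (fderiv ℝ u p (0, v))
      + inner ℝ (c p) (fderiv ℝ (fderiv ℝ u) p (0, w) (0, v)) = 0 := by
  have dc := (hc.differentiable (by norm_num) p).hasFDerivAt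
  have du := (hu.differentiable (by norm_num) p).hasFDerivAt
  have ddc := ((hc.fderiv_right (m := 1) (by norm_num)).differentiable (by norm_num) p).hasFDerivAt
  have ddu := ((hu.fderiv_right (m := 1) (by norm_num)).differentiable (by norm_num) p).hasFDerivAt
  have symm : IsSymmSndFDerivAt ℝ c p := hc.contDiffAt.isSymmSndFDerivAt (by simp)
  have key := (((ddc.clm_apply ((hasFDerivAt_const (1 : ℝ) p).prodMk du)).inner ℝ
    (hasFDerivAt_const v p)).add (dc.inner ℝ (ddu.clm_apply
      (hasFDerivAt_const ((0 : ℝ), v) p)))).unique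
    ((hasFDerivAt_const (0 : ℝ) p).congr_of_eventuallyEq (Filter.Eventually.of_forall h))
  have key' := DFunLike.congr_fun key ((0 : ℝ), w)
  simp [inner_add_left] at key'
  rw [symm.eq]
  linarith

/-- The vorticity equation in terms of the antisymmetric part of the derivative of `c`. -/
theorem inner_fderiv_antisymm_transport {c u : ℝ × E3 → E3}
    (hc : ContDiff ℝ 2 c) (hu : ContDiff ℝ 2 u)
    (h : ∀ p v, inner ℝ (fderiv ℝ c p (1, u p)) v + inner ℝ (c p) (fderiv ℝ u p (0, v)) = 0)
    (p : ℝ × E3) (w v : E3) :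
    inner ℝ (fderiv ℝ (fderiv ℝ c) p (1, u p) (0, w)) v
      + inner ℝ (fderiv ℝ c p (0, fderiv ℝ u p (0, w))) v
      + inner ℝ (fderiv ℝ c p (0, w)) (fderiv ℝ u p (0, v))
    = inner ℝ (fderiv ℝ (fderiv ℝ c) p (1, u p) (0, v)) w
      + inner ℝ (fderiv ℝ c p (0, fderiv ℝ u p (0, v))) w
      + inner ℝ (fderiv ℝ c p (0, v)) (fderiv ℝ u p (0, w)) := by
  have symm : IsSymmSndFDerivAt ℝ u p := hu.contDiffAt.isSymmSndFDerivAt (by simp)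
  have h1 := inner_fderiv_transport hc hu (fun q => h q v) p w
  have h2 := inner_fderiv_transport hc hu (fun q => h q w) p v
  rw [symm.eq] at h1
  linarith

/-- If the form field `⟪c, ·⟫` is moving with the fluid and `ρ`
satisfies the continuity equation, then `(1/ρ) curl c` is a vector field moving
with the fluid. -/
theorem curl_over_density_is_transported
    (u : ℝ → E3 → E3)
    (hu : ContDiff ℝ (⊤ : ℕ∞) (Function.uncurry u))
    (c : ℝ → E3 → E3)
    (hc : ContDiff ℝ 2 (Function.uncurry c))
    (hcLie : ∀ t x, deriv (fun τ => (innerSL ℝ (c τ x) : E3 →L[ℝ] ℝ)) t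
        + fderiv ℝ (fun y => (innerSL ℝ (c t y) : E3 →L[ℝ] ℝ)) x (u t x)
        + (innerSL ℝ (c t x) : E3 →L[ℝ] ℝ).comp (fderiv ℝ (u t) x) = 0)
    (ρ : ℝ → E3 → ℝ)
    (hρ : ContDiff ℝ 1 (Function.uncurry ρ))
    (hρpos : ∀ t x, 0 < ρ t x)
    (hρcont : ∀ t x, deriv (fun τ => ρ τ x) t + fderiv ℝ (ρ t) x (u t x)
        + ρ t x * divv (u t) x = 0) :
    ∀ t x, deriv (fun τ => (ρ τ x)⁻¹ • curlE (c τ) x) t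
        + fderiv ℝ (fun y => (ρ t y)⁻¹ • curlE (c t) y) x (u t x)
        - fderiv ℝ (u t) x ((ρ t x)⁻¹ • curlE (c t) x) = 0 := by
  intro t x
  have hu2 : ContDiff ℝ 2 (Function.uncurry u) := mod_cast contDiff_infty.1 hu 2
  have dc := hc.differentiable (by norm_num)
  have du := hu2.differentiable (by norm_num)
  have dρ := hρ.differentiable (by norm_num)
  have ddc := (hc.fderiv_right (m := 1) (by norm_num)).differentiable (by norm_num)
  have hLie : ∀ p v, inner ℝ (fderiv ℝ (Function.uncurry c) p (1, Function.uncurry u p)) v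
      + inner ℝ (Function.uncurry c p) (fderiv ℝ (Function.uncurry u) p (0, v)) = 0 := by
    rintro ⟨s, y⟩ v
    have hC : HasFDerivAt (Function.uncurry fun τ z => (innerSL ℝ (c τ z) : E3 →L[ℝ] ℝ))
        ((innerSL ℝ : E3 →L[ℝ] E3 →L[ℝ] ℝ).comp (fderiv ℝ (Function.uncurry c) (s, y))) (s, y) :=
      (innerSL ℝ : E3 →L[ℝ] E3 →L[ℝ] ℝ).hasFDerivAt.comp (s, y) (dc (s, y)).hasFDerivAt
    have h := hcLie s y
    rw [deriv_add_fderiv_eq hC.differentiableAt, hC.fderiv,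
      (hasFDerivAt_slice (du (s, y))).fderiv] at h
    simpa using DFunLike.congr_fun h v
  have hcurl : ∀ τ y, curlE (c τ) y = curlLin
      ((fderiv ℝ (Function.uncurry c) (τ, y)).comp (ContinuousLinearMap.inr ℝ ℝ E3)) := by
    intro τ y
    rw [curlE_eq_curlLin, (hasFDerivAt_slice (dc (τ, y))).fderiv]
  have hω : HasFDerivAt (Function.uncurry fun τ y => curlE (c τ) y)
      (curlLin.comp (((ContinuousLinearMap.compL ℝ E3 (ℝ × E3) E3).flip
        (ContinuousLinearMap.inr ℝ ℝ E3)).comp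
          (fderiv ℝ (fderiv ℝ (Function.uncurry c)) (t, x)))) (t, x) := by
    have h := curlLin.hasFDerivAt.comp (t, x) (((ContinuousLinearMap.compL ℝ E3 (ℝ × E3) E3).flip
        (ContinuousLinearMap.inr ℝ ℝ E3)).hasFDerivAt.comp (t, x) (ddc (t, x)).hasFDerivAt)
    exact h.congr_of_eventuallyEq (Filter.Eventually.of_forall fun q => hcurl q.1 q.2)
  have hρ0 : ρ t x ≠ 0 := (hρpos t x).ne'
  have hJ : HasFDerivAt (Function.uncurry fun τ y => (ρ τ y)⁻¹ • curlE (c τ) y) _ (t, x) :=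
    ((hasDerivAt_inv hρ0).comp_hasFDerivAt (t, x) (dρ (t, x)).hasFDerivAt).smul hω
  have hcont := hρcont t x
  rw [deriv_add_fderiv_eq (dρ (t, x)), divv, (hasFDerivAt_slice (du (t, x))).fderiv] at hcont
  have hvort := curlLin_add_trace_smul
    (S := (fderiv ℝ (fderiv ℝ (Function.uncurry c)) (t, x) (1, u t x)).comp
      (ContinuousLinearMap.inr ℝ ℝ E3))
    (M := (fderiv ℝ (Function.uncurry c) (t, x)).comp (ContinuousLinearMap.inr ℝ ℝ E3))
    (L := (fderiv ℝ (Function.uncurry u) (t, x)).comp (ContinuousLinearMap.inr ℝ ℝ E3))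
    (inner_fderiv_antisymm_transport hc hu2 hLie (t, x))
  rw [← hcurl] at hvort
  rw [deriv_add_fderiv_eq hJ.differentiableAt, hJ.fderiv, (hasFDerivAt_slice (du (t, x))).fderiv,
    map_smul, ← hvort]
  have hDρ := eq_neg_of_add_eq_zero_left hcont
  simp only [add_apply, smul_apply,
    ContinuousLinearMap.smulRight_apply, ContinuousLinearMap.comp_apply,
    ContinuousLinearMap.flip_apply, ContinuousLinearMap.compL_apply, hDρ, Function.uncurry,
    Function.comp_apply, smul_eq_mul]
  match_scalars <;> field_simp <;> ring
end
end
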